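/- Let S₁, S₂ ⊂ P³ be irreducible reduced cones over an algebraically closed field of characteristic zero, and let C₁, C₂ be their respective general hyperplane sections (plane curves). Then C₁ is birational to C₂ if and only if S₁ is Cremona equivalent to S₂. -/

import Mathlib

/-!
Concrete framework: projective space over a field `k` as `Projectivization`,
hypersurfaces as zero loci of homogeneous polynomials, rational maps given by
tuples of homogeneous polynomials, birational maps between (closed) subvarieties,
and Cremona equivalence of divisors.
-/

open MvPolynomial

/-- Projective `n`-space over `k`, as the projectivization of `k^{n+1}`. -/
abbrev ProjSp (k : Type) [Field k] (n : ℕ) : Type :=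
  Projectivization k (Fin (n + 1) → k)

namespace ProjSp

variable (k : Type) [Field k]

/-- The zero locus in `ℙⁿ` of a (homogeneous) polynomial. -/
def zeros {n : ℕ} (f : MvPolynomial (Fin (n + 1)) k) : Set (ProjSp k n) :=
  {x | eval x.rep f = 0}

/-- `D ⊆ ℙⁿ` is an irreducible and reduced divisor (hypersurface): it is the zero
locus of an irreducible homogeneous polynomial of positive degree. -/
def IsIrredDivisor {n : ℕ} (D : Set (ProjSp k n)) : Prop :=
  ∃ (d : ℕ) (f : MvPolynomial (Fin (n + 1)) k),
    0 < d ∧ f.IsHomogeneous d ∧ Irreducible f ∧ D = zeros k f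

/-- A hyperplane in `ℙⁿ`: the zero locus of a nonzero linear form. -/
def IsHyperplane {n : ℕ} (H : Set (ProjSp k n)) : Prop :=
  ∃ f : MvPolynomial (Fin (n + 1)) k, f ≠ 0 ∧ f.IsHomogeneous 1 ∧ H = zeros k f

/-- The line through two points of `ℙⁿ` (the set of points whose representing line
lies in the plane spanned by the two points). -/
def lineThrough {n : ℕ} (p q : ProjSp k n) : Set (ProjSp k n) :=
  {z | z.submodule ≤ p.submodule ⊔ q.submodule}

/-- `S` is a cone with vertex `p`: `p ∈ S` and `S` is a union of lines through `p`.
For an irreducible divisor of degree `d` this is equivalent to `p` being a point of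
multiplicity `d` on `S`. -/
def IsConeWithVertex {n : ℕ} (S : Set (ProjSp k n)) (p : ProjSp k n) : Prop :=
  p ∈ S ∧ ∀ x ∈ S, lineThrough k p x ⊆ S

/-- The cone with vertex `p` over a set `A ⊆ ℙⁿ`: the union of the lines joining `p`
to the points of `A`. -/
def coneOver {n : ℕ} (p : ProjSp k n) (A : Set (ProjSp k n)) : Set (ProjSp k n) :=
  ⋃ a ∈ A, lineThrough k p a

/-- The data of a rational map `ℙⁿ ⇢ ℙᵐ`: an `(m+1)`-tuple of homogeneous polynomials
of a common degree in `n+1` variables. -/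
structure RatMap (n m : ℕ) where
  deg : ℕ
  comp : Fin (m + 1) → MvPolynomial (Fin (n + 1)) k
  homog : ∀ i, (comp i).IsHomogeneous deg

variable {k}

/-- The rational map is defined at `x` if not all of its components vanish at `x`. -/
def RatMap.Defined {n m : ℕ} (F : RatMap k n m) (x : ProjSp k n) : Prop :=
  (fun i => eval x.rep (F.comp i)) ≠ 0

open scoped Classical in
/-- The value of a rational map at a point (junk value where undefined). -/
noncomputable def RatMap.app {n m : ℕ} (F : RatMap k n m) (x : ProjSp k n) :
    ProjSp k m :=
  if h : (fun i => eval x.rep (F.comp i)) ≠ 0 then Projectivization.mk k _ h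
  else Classical.arbitrary _

variable (k)

/-- `F` (with inverse `G`) restricts to a birational map from `A ⊆ ℙⁿ` onto `B ⊆ ℙᵐ`:
there are hypersurface complements, each meeting `A` resp. `B`, on which `F` and `G`
are defined, map `A` into `B` (resp. `B` into `A`) and are mutually inverse.  For
irreducible closed `A`, `B` this says exactly that `F` induces a birational map
`A ⇢ B`, i.e. that the strict transform (proper image) of `A` under `F` is `B`. -/
def IsBirationalOn {n m : ℕ} (F : RatMap k n m) (G : RatMap k m n)
    (A : Set (ProjSp k n)) (B : Set (ProjSp k m)) : Prop :=
  ∃ (u : MvPolynomial (Fin (n + 1)) k) (v : MvPolynomial (Fin (m + 1)) k)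
    (du dv : ℕ), u.IsHomogeneous du ∧ v.IsHomogeneous dv ∧
    ¬ A ⊆ zeros k u ∧ ¬ B ⊆ zeros k v ∧
    (∀ x ∈ A \ zeros k u,
      F.Defined x ∧ F.app x ∈ B ∧ G.Defined (F.app x) ∧ G.app (F.app x) = x) ∧
    (∀ y ∈ B \ zeros k v,
      G.Defined y ∧ G.app y ∈ A ∧ F.Defined (G.app y) ∧ F.app (G.app y) = y)

/-- `A ⊆ ℙⁿ` and `B ⊆ ℙᵐ` are birational (as abstract varieties). -/
def Birational {n m : ℕ} (A : Set (ProjSp k n)) (B : Set (ProjSp k m)) : Prop :=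
  ∃ (F : RatMap k n m) (G : RatMap k m n), IsBirationalOn k F G A B

/-- Two divisors `D, D' ⊆ ℙⁿ` are Cremona equivalent: there is a birational self-map
`Φ` of `ℙⁿ` (a Cremona transformation) whose strict transform of `D` is `D'`,
i.e. `Φ` restricts to a birational map from `D` onto `D'`. -/
def CremonaEquivalent {n : ℕ} (D D' : Set (ProjSp k n)) : Prop :=
  ∃ (F : RatMap k n n) (G : RatMap k n n),
    IsBirationalOn k F G Set.univ Set.univ ∧ IsBirationalOn k F G D D'

/-- `C` is a rational variety: it is birational to some projective space. -/
def IsRationalVariety {n : ℕ} (C : Set (ProjSp k n)) : Prop :=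
  ∃ m : ℕ, Birational k C (Set.univ : Set (ProjSp k m))

end ProjSp

open ProjSp

/-!
A cone with vertex `p` is, after a projective change of coordinates, the locus of the generic point
`[1 : a : b : X]` over `K(X)`, where `[1 : a : b : 0]` is a generic point of the plane section and
`K = k(a, b)` its function field; so the sections are birational iff their function fields are
isomorphic, and the cones are birational iff the rational function fields in one variable over them
are isomorphic.

If the function fields agree, the two sections are plane models of one curve. Changing one
coordinate at a time, it suffices to pass from `(a, b)` to `(a, c)`. Over `E = k(a)` let `P` and `Q`
be the minimal polynomials of `b = B(c)` and `c = C(b)`. The transformation `(y, z) ↦ (w, s)` with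
`w = C(y) + z P(y)` and `s = (y - B(w)) / Q(w)` is birational on the affine plane over `E`, its
inverse being of the same shape since `y = B(w) + s Q(w)`. By L'Hôpital's rule at the zero `b` of
`P` it carries the line `y = b` birationally onto the line `w = c`, and it spreads out to a Cremona
transformation of `ℙ³` exchanging the cones.

Conversely, a Cremona equivalence of the cones yields `K(X) ≃ K'(X)`. Since `K` is the algebraic
closure of `k(a)` in `K(X)`, either the isomorphism carries constants to constants, or neither
`K → K'(X)` nor `K' → K(X)` lands in the constants. In the second case specializing the coefficients
in `K'` to `k`, with the Wronskian of a nonconstant element as the obstruction to be kept nonzero,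
embeds `K` into `k(X)`, and Lüroth's theorem shows that both fields are isomorphic to `k(X)`.
-/

namespace ProjSp

section Polynomials

lemma aeval_smul_of_isHomogeneous {σ R A : Type*} [CommRing R] [CommRing A] [Algebra R A]
    {g : MvPolynomial σ R} {d : ℕ} (hg : g.IsHomogeneous d) (a : A) (x : σ → A) :
    aeval (a • x) g = a ^ d * aeval x g := by
  simp only [aeval_def, eval₂_eq, Finset.mul_sum]
  refine Finset.sum_congr rfl fun s hs => ?_
  simp only [Pi.smul_apply, smul_eq_mul, mul_pow, Finset.prod_mul_distrib,
    Finset.prod_pow_eq_pow_sum, ← hg.degree_eq_sum_deg_support hs]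
  ring

lemma aeval_aeval {σ τ R A : Type*} [CommRing R] [CommRing A] [Algebra R A]
    (F : σ → MvPolynomial τ R) (x : τ → A) (g : MvPolynomial σ R) :
    aeval x (aeval F g) = aeval (fun i => aeval x (F i)) g := by
  rw [← comp_aeval_apply]

lemma aeval_algHom_comp {σ R A B : Type*} [CommRing R] [CommRing A] [Algebra R A] [CommRing B]
    [Algebra R B] (φ : A →ₐ[R] B) (x : σ → A) (g : MvPolynomial σ R) :
    aeval (φ ∘ x) g = φ (aeval x g) :=
  (comp_aeval_apply (R := R) x φ g).symm

end Polynomials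

section GenericPoints

variable {k : Type} [Field k] {n : ℕ} {L L' A : Type*} [Field L] [Algebra k L] [Field L']
  [Algebra k L'] [CommRing A] [Algebra k A]

/-- `v` is a specialization of `ξ`: all forms over `k` that vanish at `ξ` vanish at `v`. -/
def IsSpecialization (k : Type) [Field k] {n : ℕ} {L A : Type*} [CommRing L] [Algebra k L]
    [CommRing A] [Algebra k A] (ξ : Fin (n + 1) → L) (v : Fin (n + 1) → A) : Prop :=
  ∀ d (g : MvPolynomial (Fin (n + 1)) k), g.IsHomogeneous d → aeval ξ g = 0 → aeval v g = 0

/-- The locus of `ξ`: the closed subset of `ℙⁿ` over `k` of which the point with homogeneous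
coordinates `ξ` in an extension field is a generic point. -/
def locus (k : Type) [Field k] {n : ℕ} {L : Type*} [Field L] [Algebra k L]
    (ξ : Fin (n + 1) → L) : Set (ProjSp k n) :=
  {x | IsSpecialization k ξ x.rep}

lemma IsSpecialization.trans {B : Type*} [CommRing B] [Algebra k B] {ξ : Fin (n + 1) → L}
    {v : Fin (n + 1) → A} {w : Fin (n + 1) → B} (h : IsSpecialization k ξ v)
    (h' : IsSpecialization k v w) : IsSpecialization k ξ w :=
  fun d g hg h0 => h' d g hg (h d g hg h0)

lemma IsSpecialization.ne_zero {ξ : Fin (n + 1) → L} {v : Fin (n + 1) → A}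
    (h : IsSpecialization k ξ v) (hv : v ≠ 0) : ξ ≠ 0 := by
  rintro rfl
  refine hv (funext fun i => ?_)
  simpa using h 1 (X i) (isHomogeneous_X k i) (by simp)

lemma aeval_smul_eq_zero_iff {c : L} (hc : c ≠ 0) {ξ : Fin (n + 1) → L}
    {g : MvPolynomial (Fin (n + 1)) k} {d : ℕ} (hg : g.IsHomogeneous d) :
    aeval (c • ξ) g = 0 ↔ aeval ξ g = 0 := by
  simp [aeval_smul_of_isHomogeneous hg, hc]

lemma isSpecialization_smul_left {c : L} (hc : c ≠ 0) {ξ : Fin (n + 1) → L}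
    {v : Fin (n + 1) → A} : IsSpecialization k (c • ξ) v ↔ IsSpecialization k ξ v :=
  forall₂_congr fun _ _ => forall_congr' fun hg => by rw [aeval_smul_eq_zero_iff hc hg]

lemma isSpecialization_smul_right {c : L'} (hc : c ≠ 0) {ξ : Fin (n + 1) → L}
    {v : Fin (n + 1) → L'} : IsSpecialization k ξ (c • v) ↔ IsSpecialization k ξ v :=
  forall₂_congr fun _ _ => forall_congr' fun hg => by rw [aeval_smul_eq_zero_iff hc hg]

lemma mem_zeros_iff {g : MvPolynomial (Fin (n + 1)) k} {x : ProjSp k n} :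
    x ∈ zeros k g ↔ aeval x.rep g = 0 := by
  rw [aeval_eq_eval]; rfl

lemma exists_rep_mk_eq_smul {v : Fin (n + 1) → k} (hv : v ≠ 0) :
    ∃ a : k, a ≠ 0 ∧ (Projectivization.mk k v hv).rep = a • v := by
  obtain ⟨a, ha⟩ := Projectivization.exists_smul_eq_mk_rep k v hv
  exact ⟨a, a.ne_zero, ha.symm⟩

lemma mk_mem_zeros {g : MvPolynomial (Fin (n + 1)) k} {d : ℕ} (hg : g.IsHomogeneous d)
    {v : Fin (n + 1) → k} (hv : v ≠ 0) :
    Projectivization.mk k v hv ∈ zeros k g ↔ aeval v g = 0 := by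
  obtain ⟨a, ha, h⟩ := exists_rep_mk_eq_smul hv
  rw [mem_zeros_iff, h, aeval_smul_eq_zero_iff ha hg]

lemma mk_mem_locus {ξ : Fin (n + 1) → L} {v : Fin (n + 1) → k} (hv : v ≠ 0) :
    Projectivization.mk k v hv ∈ locus k ξ ↔ IsSpecialization k ξ v := by
  obtain ⟨a, ha, h⟩ := exists_rep_mk_eq_smul hv
  rw [locus, Set.mem_ofPred_eq, h, isSpecialization_smul_right ha]

/-- The Nullstellensatz for the ideal of forms vanishing at `ξ`. -/
lemma exists_specialization_aeval_ne_zero [IsAlgClosed k] {ξ : Fin (n + 1) → L} (hξ : ξ ≠ 0)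
    {u : MvPolynomial (Fin (n + 1)) k} {d : ℕ} (hu : u.IsHomogeneous d) (h : aeval ξ u ≠ 0) :
    ∃ v : Fin (n + 1) → k, v ≠ 0 ∧ IsSpecialization k ξ v ∧ aeval v u ≠ 0 := by
  obtain ⟨i, hi⟩ := Function.ne_iff.1 hξ
  -- the kernel of `φ` is the homogeneous ideal generated by the forms vanishing at `ξ`
  let φ : MvPolynomial (Fin (n + 1)) k →ₐ[k] Polynomial L :=
    aeval ((Polynomial.X : Polynomial L) • (Polynomial.CAlgHom (R := k) ∘ ξ))
  have hφ {d g} (hg : g.IsHomogeneous d) :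
      φ g = Polynomial.X ^ d * Polynomial.C (aeval ξ g) := by
    rw [aeval_smul_of_isHomogeneous hg, aeval_algHom_comp, Polynomial.CAlgHom_apply]
  have hprime : (RingHom.ker φ).IsPrime := RingHom.ker_isPrime φ
  have hnot : u * X i ∉ RingHom.ker φ := by
    rw [RingHom.mem_ker, hφ (hu.mul (isHomogeneous_X k i)), map_mul, aeval_X]
    exact mul_ne_zero (pow_ne_zero _ Polynomial.X_ne_zero)
      (Polynomial.C_ne_zero.2 (mul_ne_zero h hi))
  rw [← MvPolynomial.IsPrime.vanishingIdeal_zeroLocus (K := k) (RingHom.ker φ)] at hnot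
  simp only [mem_vanishingIdeal_iff, not_forall] at hnot
  obtain ⟨v, hv, hne⟩ := hnot
  rw [map_mul, aeval_X] at hne
  refine ⟨v, ?_, fun d g hg h0 => hv _ ?_, left_ne_zero_of_mul hne⟩
  · rintro rfl
    exact hne (mul_zero _)
  · rw [RingHom.mem_ker, hφ hg, h0, Polynomial.C_0, mul_zero]

lemma aeval_eq_zero_of_forall_specialization [IsAlgClosed k] {ξ : Fin (n + 1) → L} (hξ : ξ ≠ 0)
    {u : MvPolynomial (Fin (n + 1)) k} {e : ℕ} (hu : u.IsHomogeneous e) (hξu : aeval ξ u ≠ 0)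
    {g : MvPolynomial (Fin (n + 1)) k} {d : ℕ} (hg : g.IsHomogeneous d)
    (h : ∀ w : Fin (n + 1) → k, w ≠ 0 → IsSpecialization k ξ w → aeval w u ≠ 0 → aeval w g = 0) :
    aeval ξ g = 0 := by
  by_contra hne
  obtain ⟨w, hw, hξw, hwgu⟩ := exists_specialization_aeval_ne_zero hξ (hg.mul hu)
    (by rw [map_mul]; exact mul_ne_zero hne hξu)
  rw [map_mul] at hwgu
  exact left_ne_zero_of_mul hwgu (h w hw hξw (right_ne_zero_of_mul hwgu))

lemma locus_subset_zeros_iff [IsAlgClosed k] {ξ : Fin (n + 1) → L} (hξ : ξ ≠ 0)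
    {u : MvPolynomial (Fin (n + 1)) k} {d : ℕ} (hu : u.IsHomogeneous d) :
    locus k ξ ⊆ zeros k u ↔ aeval ξ u = 0 := by
  refine ⟨fun h => ?_, fun h x hx => mem_zeros_iff.2 (hx d u hu h)⟩
  exact aeval_eq_zero_of_forall_specialization hξ (isHomogeneous_one _ _) (by simp) hu
    fun w hw hξw _ => (mk_mem_zeros hu hw).1 (h ((mk_mem_locus hw).2 hξw))

lemma IsSpecialization.locus_subset {ξ : Fin (n + 1) → L} {η : Fin (n + 1) → L'}
    (h : IsSpecialization k ξ η) : locus k η ⊆ locus k ξ :=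
  fun _ hx => h.trans hx

lemma IsSpecialization.locus_eq {ξ : Fin (n + 1) → L} {η : Fin (n + 1) → L'}
    (h : IsSpecialization k ξ η) (h' : IsSpecialization k η ξ) : locus k ξ = locus k η :=
  h'.locus_subset.antisymm h.locus_subset

lemma isSpecialization_of_locus_eq [IsAlgClosed k] {ξ : Fin (n + 1) → L} {η : Fin (n + 1) → L'}
    (hη : η ≠ 0) (h : locus k ξ = locus k η) : IsSpecialization k ξ η :=
  fun _ _ hg h0 => (locus_subset_zeros_iff hη hg).1 (h ▸ fun _ hx => mem_zeros_iff.2 (hx _ _ hg h0))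

lemma locus_smul {c : L} (hc : c ≠ 0) (ξ : Fin (n + 1) → L) : locus k (c • ξ) = locus k ξ :=
  Set.ext fun _ => isSpecialization_smul_left hc

lemma locus_algHom_comp (φ : L →ₐ[k] L') (ξ : Fin (n + 1) → L) :
    locus k (φ ∘ ξ) = locus k ξ := by
  refine IsSpecialization.locus_eq (fun d g _ h0 => ?_) (fun d g _ h0 => ?_)
  · rwa [aeval_algHom_comp, map_eq_zero] at h0
  · rw [aeval_algHom_comp, h0, map_zero]

variable (k) in
/-- `A ⊆ ℙⁿ` has a generic point, i.e. it is an irreducible closed subset. -/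
def HasGenericPoint (A : Set (ProjSp k n)) : Prop :=
  ∃ (L : Type) (_ : Field L) (_ : Algebra k L) (ξ : Fin (n + 1) → L), ξ ≠ 0 ∧ locus k ξ = A

lemma hasGenericPoint_locus {L : Type} [Field L] [Algebra k L] {ξ : Fin (n + 1) → L}
    (hξ : ξ ≠ 0) : HasGenericPoint k (locus k ξ) :=
  ⟨L, _, _, ξ, hξ, rfl⟩

end GenericPoints

section RationalMaps

variable {k : Type} [Field k] {n m l : ℕ} {A B : Type*} [CommRing A] [Algebra k A] [CommRing B]
  [Algebra k B] {L L' : Type*} [Field L] [Algebra k L] [Field L'] [Algebra k L']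

/-- The components of a rational map evaluated at a vector of homogeneous coordinates. -/
noncomputable def RatMap.evalAt (F : RatMap k n m) (x : Fin (n + 1) → A) : Fin (m + 1) → A :=
  fun i => aeval x (F.comp i)

/-- Composition of rational maps, in diagrammatic order. -/
noncomputable def RatMap.trans (F : RatMap k n m) (G : RatMap k m l) : RatMap k n l where
  deg := F.deg * G.deg
  comp i := aeval F.comp (G.comp i)
  homog i := (G.homog i).aeval _ F.homog

lemma RatMap.evalAt_smul (F : RatMap k n m) (a : A) (x : Fin (n + 1) → A) :
    F.evalAt (a • x) = a ^ F.deg • F.evalAt x :=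
  funext fun i => aeval_smul_of_isHomogeneous (F.homog i) a x

lemma RatMap.evalAt_trans (F : RatMap k n m) (G : RatMap k m l) (x : Fin (n + 1) → A) :
    (F.trans G).evalAt x = G.evalAt (F.evalAt x) := by
  funext i
  exact aeval_aeval F.comp x (G.comp i)

lemma IsSpecialization.evalAt {x : Fin (n + 1) → A} {y : Fin (n + 1) → B}
    (h : IsSpecialization k x y) (F : RatMap k n m) :
    IsSpecialization k (F.evalAt x) (F.evalAt y) := fun d g hg h0 => by
  have := h _ _ (hg.aeval _ F.homog) ((aeval_aeval _ _ _).trans h0)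
  rwa [aeval_aeval] at this

lemma RatMap.evalAt_rep_mk (F : RatMap k n m) {v : Fin (n + 1) → k} (hv : v ≠ 0) :
    ∃ c : k, c ≠ 0 ∧
      (fun i => eval (Projectivization.mk k v hv).rep (F.comp i)) = c • F.evalAt v := by
  obtain ⟨a, ha, h⟩ := exists_rep_mk_eq_smul hv
  refine ⟨a ^ F.deg, pow_ne_zero _ ha, ?_⟩
  rw [h, ← F.evalAt_smul]
  exact funext fun i => by rw [RatMap.evalAt, aeval_eq_eval]

lemma RatMap.defined_mk (F : RatMap k n m) {v : Fin (n + 1) → k} (hv : v ≠ 0) :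
    F.Defined (Projectivization.mk k v hv) ↔ F.evalAt v ≠ 0 := by
  obtain ⟨c, hc, h⟩ := F.evalAt_rep_mk hv
  rw [RatMap.Defined, h, smul_ne_zero_iff_right hc]

lemma RatMap.app_mk (F : RatMap k n m) {v : Fin (n + 1) → k} (hv : v ≠ 0) (h : F.evalAt v ≠ 0) :
    F.app (Projectivization.mk k v hv) = Projectivization.mk k (F.evalAt v) h := by
  obtain ⟨c, _, hc⟩ := F.evalAt_rep_mk hv
  have hdef : (fun i => eval (Projectivization.mk k v hv).rep (F.comp i)) ≠ 0 :=
    (F.defined_mk hv).2 h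
  rw [RatMap.app, dif_pos hdef, Projectivization.mk_eq_mk_iff']
  exact ⟨c, hc.symm⟩

/-- The `2 × 2` minors of the matrix with rows `R(x)` and `x`; they cut out the fixed locus
of `R`. -/
noncomputable def RatMap.fixedMinor (R : RatMap k n n) (p q : Fin (n + 1)) :
    MvPolynomial (Fin (n + 1)) k :=
  R.comp p * X q - R.comp q * X p

lemma RatMap.fixedMinor_isHomogeneous (R : RatMap k n n) (p q : Fin (n + 1)) :
    (R.fixedMinor p q).IsHomogeneous (R.deg + 1) :=
  ((R.homog p).mul (isHomogeneous_X k q)).sub ((R.homog q).mul (isHomogeneous_X k p))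

lemma RatMap.exists_evalAt_eq_smul_iff (R : RatMap k n n) {x : Fin (n + 1) → L} (hx : x ≠ 0) :
    (∃ c : L, R.evalAt x = c • x) ↔ ∀ p q, aeval x (R.fixedMinor p q) = 0 := by
  simp only [fixedMinor, map_sub, map_mul, aeval_X, sub_eq_zero]
  change _ ↔ ∀ p q, R.evalAt x p * x q = R.evalAt x q * x p
  refine ⟨fun ⟨c, hc⟩ p q => ?_, fun h => ?_⟩
  · simp only [hc, Pi.smul_apply, smul_eq_mul]
    ring
  · obtain ⟨i, hi : x i ≠ 0⟩ := Function.ne_iff.1 hx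
    refine ⟨R.evalAt x i / x i, funext fun p => ?_⟩
    rw [Pi.smul_apply, smul_eq_mul, div_mul_eq_mul_div, eq_div_iff hi, h]

lemma IsSpecialization.exists_evalAt_eq_smul {ξ : Fin (n + 1) → L} {v : Fin (n + 1) → L'}
    (h : IsSpecialization k ξ v) (hv : v ≠ 0) {R : RatMap k n n} {b : L}
    (hR : R.evalAt ξ = b • ξ) : ∃ c : L', R.evalAt v = c • v := by
  rw [R.exists_evalAt_eq_smul_iff hv]
  exact fun p q => h _ _ (R.fixedMinor_isHomogeneous p q)
    ((R.exists_evalAt_eq_smul_iff (h.ne_zero hv)).1 ⟨b, hR⟩ p q)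

end RationalMaps

section BirationalMaps

variable {k : Type} [Field k] {n m l : ℕ}

variable (k) in
/-- `F` maps a dense open subset of `A` into `B`, and `G` is inverse to it there; one half of
`IsBirationalOn`. -/
def HasLeftInverseOn (F : RatMap k n m) (G : RatMap k m n) (A : Set (ProjSp k n))
    (B : Set (ProjSp k m)) : Prop :=
  ∃ (u : MvPolynomial (Fin (n + 1)) k) (e : ℕ), u.IsHomogeneous e ∧ ¬ A ⊆ zeros k u ∧
    ∀ x ∈ A \ zeros k u, F.Defined x ∧ F.app x ∈ B ∧ G.Defined (F.app x) ∧ G.app (F.app x) = x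

lemma isBirationalOn_iff {F : RatMap k n m} {G : RatMap k m n} {A : Set (ProjSp k n)}
    {B : Set (ProjSp k m)} :
    IsBirationalOn k F G A B ↔ HasLeftInverseOn k F G A B ∧ HasLeftInverseOn k G F B A :=
  ⟨fun ⟨u, v, d, e, hu, hv, hA, hB, hF, hG⟩ => ⟨⟨u, d, hu, hA, hF⟩, ⟨v, e, hv, hB, hG⟩⟩,
    fun ⟨⟨u, d, hu, hA, hF⟩, ⟨v, e, hv, hB, hG⟩⟩ => ⟨u, v, d, e, hu, hv, hA, hB, hF, hG⟩⟩

lemma IsBirationalOn.symm {F : RatMap k n m} {G : RatMap k m n} {A : Set (ProjSp k n)}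
    {B : Set (ProjSp k m)} (h : IsBirationalOn k F G A B) : IsBirationalOn k G F B A :=
  isBirationalOn_iff.2 (isBirationalOn_iff.1 h).symm

variable {L L' : Type*} [Field L] [Algebra k L] [Field L'] [Algebra k L']
  {ξ : Fin (n + 1) → L} {η : Fin (m + 1) → L'} {F : RatMap k n m} {G : RatMap k m n}

lemma mk_inverse_iff {B : Set (ProjSp k m)} {w : Fin (n + 1) → k} (hw : w ≠ 0) :
    (F.Defined (Projectivization.mk k w hw) ∧ F.app (Projectivization.mk k w hw) ∈ B ∧
      G.Defined (F.app (Projectivization.mk k w hw)) ∧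
      G.app (F.app (Projectivization.mk k w hw)) = Projectivization.mk k w hw) ↔
    (∃ h : F.evalAt w ≠ 0, Projectivization.mk k _ h ∈ B) ∧
      ∃ c : k, c ≠ 0 ∧ G.evalAt (F.evalAt w) = c • w := by
  rw [F.defined_mk hw]
  constructor
  · rintro ⟨hF, hB, hG, hGF⟩
    rw [F.app_mk hw hF] at hB hG hGF
    rw [G.defined_mk] at hG
    rw [G.app_mk hF hG, Projectivization.mk_eq_mk_iff'] at hGF
    obtain ⟨c, hc⟩ := hGF
    refine ⟨⟨hF, hB⟩, c, ?_, hc.symm⟩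
    rintro rfl
    exact hG (by rw [← hc, zero_smul])
  · rintro ⟨⟨hF, hB⟩, c, hc, hGF⟩
    have hG : G.evalAt (F.evalAt w) ≠ 0 := hGF ▸ smul_ne_zero hc hw
    rw [F.app_mk hw hF, G.defined_mk, G.app_mk hF hG, Projectivization.mk_eq_mk_iff']
    exact ⟨hF, hB, hG, c, hGF.symm⟩

variable [IsAlgClosed k]

lemma HasLeftInverseOn.generic (hξ : ξ ≠ 0) (h : HasLeftInverseOn k F G (locus k ξ) (locus k η)) :
    F.evalAt ξ ≠ 0 ∧ IsSpecialization k η (F.evalAt ξ) ∧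
      ∃ b : L, b ≠ 0 ∧ G.evalAt (F.evalAt ξ) = b • ξ := by
  obtain ⟨u, e, hu, hξu, hFG⟩ := h
  rw [locus_subset_zeros_iff hξ hu] at hξu
  have hpt (w : Fin (n + 1) → k) (hw : w ≠ 0) (hξw : IsSpecialization k ξ w) (hwu : aeval w u ≠ 0) :
      F.evalAt w ≠ 0 ∧ IsSpecialization k η (F.evalAt w) ∧
        ∃ c : k, c ≠ 0 ∧ G.evalAt (F.evalAt w) = c • w := by
    obtain ⟨⟨hF, hη⟩, hc⟩ := (mk_inverse_iff hw).1 <| hFG _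
      ⟨(mk_mem_locus hw).2 hξw, fun hmem => hwu ((mk_mem_zeros hu hw).1 hmem)⟩
    exact ⟨hF, (mk_mem_locus hF).1 hη, hc⟩
  have hne : F.evalAt ξ ≠ 0 ∧ G.evalAt (F.evalAt ξ) ≠ 0 := by
    obtain ⟨w, hw, hξw, hwu⟩ := exists_specialization_aeval_ne_zero hξ hu hξu
    obtain ⟨hFw, -, c, hc, hcw⟩ := hpt w hw hξw hwu
    exact ⟨(hξw.evalAt F).ne_zero hFw,
      ((hξw.evalAt F).evalAt G).ne_zero (hcw ▸ smul_ne_zero hc hw)⟩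
  refine ⟨hne.1, fun d g hg h0 => ?_, ?_⟩
  · refine (aeval_aeval F.comp ξ g).symm.trans <|
      aeval_eq_zero_of_forall_specialization hξ hu hξu (hg.aeval _ F.homog) fun w hw hξw hwu => ?_
    exact (aeval_aeval F.comp w g).trans ((hpt w hw hξw hwu).2.1 d g hg h0)
  · obtain ⟨b, hb⟩ := ((F.trans G).exists_evalAt_eq_smul_iff hξ).2 fun p q =>
      aeval_eq_zero_of_forall_specialization hξ hu hξu ((F.trans G).fixedMinor_isHomogeneous p q)
        fun w hw hξw hwu => by
          obtain ⟨-, -, c, -, hc⟩ := hpt w hw hξw hwu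
          exact ((F.trans G).exists_evalAt_eq_smul_iff hw).1 ⟨c, (F.evalAt_trans G w).trans hc⟩ p q
    rw [RatMap.evalAt_trans] at hb
    exact ⟨b, fun h0 => hne.2 (by rw [hb, h0, zero_smul]), hb⟩

lemma hasLeftInverseOn_locus (hξ : ξ ≠ 0) (hF : F.evalAt ξ ≠ 0)
    (hη : IsSpecialization k η (F.evalAt ξ)) {b : L} (hb : b ≠ 0)
    (hGF : G.evalAt (F.evalAt ξ) = b • ξ) :
    HasLeftInverseOn k F G (locus k ξ) (locus k η) := by
  obtain ⟨i, hi : ξ i ≠ 0⟩ := Function.ne_iff.1 hξ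
  obtain ⟨j, hj : F.evalAt ξ j ≠ 0⟩ := Function.ne_iff.1 hF
  have hu := ((F.trans G).homog i).mul (F.homog j)
  have hcomp : (F.trans G).evalAt ξ = b • ξ := (F.evalAt_trans G ξ).trans hGF
  refine ⟨_, _, hu, ?_, fun x => ?_⟩
  · rw [locus_subset_zeros_iff hξ hu, map_mul]
    exact mul_ne_zero ((congrFun hcomp i).trans_ne (mul_ne_zero hb hi)) hj
  induction x using Projectivization.ind with | h w hw =>
  rintro ⟨hξw, hwu⟩
  rw [mk_mem_locus] at hξw
  rw [mk_mem_zeros hu, map_mul, mul_eq_zero, not_or] at hwu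
  have hFw : F.evalAt w ≠ 0 := fun h0 => hwu.2 (congrFun h0 j)
  obtain ⟨c, hc⟩ := hξw.exists_evalAt_eq_smul hw hcomp
  refine (mk_inverse_iff hw).2 ⟨⟨hFw, (mk_mem_locus hFw).2 (hη.trans (hξw.evalAt F))⟩, c, ?_,
    (F.evalAt_trans G w).symm.trans hc⟩
  rintro rfl
  exact hwu.1 ((congrFun hc i).trans (zero_mul _))

lemma isBirationalOn_locus_iff (hξ : ξ ≠ 0) (hη : η ≠ 0) :
    IsBirationalOn k F G (locus k ξ) (locus k η) ↔
      locus k (F.evalAt ξ) = locus k η ∧ F.evalAt ξ ≠ 0 ∧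
        ∃ b : L, b ≠ 0 ∧ G.evalAt (F.evalAt ξ) = b • ξ := by
  rw [isBirationalOn_iff]
  constructor
  · rintro ⟨hFG, hGF⟩
    obtain ⟨hF, hηF, hb⟩ := hFG.generic hξ
    obtain ⟨-, hξG, c, hc, hFGη⟩ := hGF.generic hη
    have hFη := hξG.evalAt F
    rw [hFGη, isSpecialization_smul_right hc] at hFη
    exact ⟨hFη.locus_eq hηF, hF, hb⟩
  · rintro ⟨hloc, hF, b, hb, hGF⟩
    have hηF := isSpecialization_of_locus_eq hF hloc.symm
    have hFη := isSpecialization_of_locus_eq hη hloc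
    refine ⟨hasLeftInverseOn_locus hξ hF hηF hb hGF, ?_⟩
    have hFGF : (G.trans F).evalAt (F.evalAt ξ) = b ^ F.deg • F.evalAt ξ := by
      rw [G.evalAt_trans, hGF, F.evalAt_smul]
    obtain ⟨c, hc⟩ := hFη.exists_evalAt_eq_smul hη hFGF
    have hGη : IsSpecialization k ξ (G.evalAt η) :=
      (isSpecialization_smul_left hb).1 (hGF ▸ hFη.evalAt G)
    have hne := hηF.evalAt (G.trans F)
    rw [hFGF, hc, isSpecialization_smul_right (pow_ne_zero _ hb)] at hne
    have hc0 : c ≠ 0 := by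
      rintro rfl
      exact hne.ne_zero hF (zero_smul _ _)
    rw [G.evalAt_trans] at hc
    refine hasLeftInverseOn_locus hη ?_ hGη hc0 hc
    refine (hηF.evalAt G).ne_zero ?_
    rw [hGF]
    exact smul_ne_zero hb hξ

lemma IsBirationalOn.trans {A : Set (ProjSp k n)} {B : Set (ProjSp k m)} {C : Set (ProjSp k l)}
    (hA : HasGenericPoint k A) (hB : HasGenericPoint k B) (hC : HasGenericPoint k C)
    {F' : RatMap k m l} {G' : RatMap k l m}
    (h : IsBirationalOn k F G A B) (h' : IsBirationalOn k F' G' B C) :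
    IsBirationalOn k (F.trans F') (G'.trans G) A C := by
  obtain ⟨L, _, _, ξ, hξ, rfl⟩ := hA
  obtain ⟨M, _, _, η, hη, rfl⟩ := hB
  obtain ⟨N, _, _, θ, hθ, rfl⟩ := hC
  obtain ⟨hFξ, hne, b, hb, hGF⟩ := (isBirationalOn_locus_iff hξ hη).1 h
  rw [← hFξ] at h'
  obtain ⟨hF', hne', b', hb', hGF'⟩ := (isBirationalOn_locus_iff hne hθ).1 h'
  rw [isBirationalOn_locus_iff hξ hθ, F.evalAt_trans, G'.evalAt_trans, hGF', G.evalAt_smul, hGF,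
    smul_smul]
  exact ⟨hF', hne', _, mul_ne_zero (pow_ne_zero _ hb') hb, rfl⟩

omit [IsAlgClosed k] in
lemma Birational.symm {A : Set (ProjSp k n)} {B : Set (ProjSp k m)} (h : Birational k A B) :
    Birational k B A :=
  let ⟨F, G, hFG⟩ := h
  ⟨G, F, hFG.symm⟩

omit [IsAlgClosed k] in
lemma CremonaEquivalent.symm {A B : Set (ProjSp k n)} (h : CremonaEquivalent k A B) :
    CremonaEquivalent k B A :=
  let ⟨F, G, h₁, h₂⟩ := h
  ⟨G, F, h₁.symm, h₂.symm⟩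

lemma Birational.trans {A : Set (ProjSp k n)} {B : Set (ProjSp k m)} {C : Set (ProjSp k l)}
    (hA : HasGenericPoint k A) (hB : HasGenericPoint k B) (hC : HasGenericPoint k C)
    (h : Birational k A B) (h' : Birational k B C) : Birational k A C :=
  let ⟨_, _, hF⟩ := h
  let ⟨_, _, hF'⟩ := h'
  ⟨_, _, hF.trans hA hB hC hF'⟩

lemma Birational.congr {l' : ℕ} {A : Set (ProjSp k n)} {A' : Set (ProjSp k m)}
    {B : Set (ProjSp k l)} {B' : Set (ProjSp k l')} (hA : HasGenericPoint k A)
    (hA' : HasGenericPoint k A') (hB : HasGenericPoint k B) (hB' : HasGenericPoint k B')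
    (h : Birational k A A') (h' : Birational k B B') : Birational k A B ↔ Birational k A' B' :=
  ⟨fun hAB => h.symm.trans hA' hA hB' (hAB.trans hA hB hB' h'),
    fun hAB => h.trans hA hA' hB (hAB.trans hA' hB' hB h'.symm)⟩

omit [IsAlgClosed k]

variable (k n) in
/-- The generic point of `ℙⁿ`, with the variables as homogeneous coordinates. -/
noncomputable def genericPoint : Fin (n + 1) → FractionRing (MvPolynomial (Fin (n + 1)) k) :=
  algebraMap (MvPolynomial (Fin (n + 1)) k) (FractionRing (MvPolynomial (Fin (n + 1)) k)) ∘ X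

lemma aeval_genericPoint (g : MvPolynomial (Fin (n + 1)) k) :
    aeval (genericPoint k n) g = algebraMap _ _ g := by
  rw [genericPoint, aeval_algebraMap_apply, aeval_X_left_apply]

lemma aeval_genericPoint_eq_zero_iff {g : MvPolynomial (Fin (n + 1)) k} :
    aeval (genericPoint k n) g = 0 ↔ g = 0 := by
  rw [aeval_genericPoint, map_eq_zero_iff _ (IsFractionRing.injective _ _)]

lemma genericPoint_ne_zero : genericPoint k n ≠ 0 := fun h =>
  X_ne_zero 0 <| aeval_genericPoint_eq_zero_iff.1 <| (aeval_X _ _).trans (congrFun h 0)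

lemma isSpecialization_genericPoint {A : Type*} [CommRing A] [Algebra k A]
    (x : Fin (n + 1) → A) : IsSpecialization k (genericPoint k n) x := fun d g _ h0 => by
  rw [aeval_genericPoint_eq_zero_iff.1 h0, map_zero]

lemma locus_genericPoint : locus k (genericPoint k n) = Set.univ :=
  Set.eq_univ_of_forall fun x => isSpecialization_genericPoint x.rep

lemma hasGenericPoint_univ : HasGenericPoint k (Set.univ : Set (ProjSp k n)) :=
  locus_genericPoint (k := k) (n := n) ▸
    hasGenericPoint_locus genericPoint_ne_zero

variable [IsAlgClosed k]

lemma isSpecialization_of_locus_eq_univ {A : Type*} [CommRing A] [Algebra k A]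
    {ξ : Fin (n + 1) → L} (hξ : locus k ξ = Set.univ) (x : Fin (n + 1) → A) :
    IsSpecialization k ξ x :=
  (isSpecialization_of_locus_eq genericPoint_ne_zero (hξ.trans locus_genericPoint.symm)).trans
    (isSpecialization_genericPoint x)

lemma isBirationalOn_univ {F G : RatMap k n n} {b c : L} (hξ0 : ξ ≠ 0)
    (hξ : locus k ξ = Set.univ) (hb : b ≠ 0) (hc : c ≠ 0)
    (hGF : G.evalAt (F.evalAt ξ) = b • ξ) (hFG : F.evalAt (G.evalAt ξ) = c • ξ) :
    IsBirationalOn k F G Set.univ Set.univ := by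
  have hspec (x : Fin (n + 1) → L) := isSpecialization_of_locus_eq_univ hξ x
  have hF := ((hspec _).evalAt F).ne_zero (hFG ▸ smul_ne_zero hc hξ0)
  have hG := ((hspec _).evalAt G).ne_zero (hGF ▸ smul_ne_zero hb hξ0)
  rw [← hξ, isBirationalOn_iff]
  exact ⟨hasLeftInverseOn_locus hξ0 hF (hspec _) hb hGF,
    hasLeftInverseOn_locus hξ0 hG (hspec _) hc hFG⟩

lemma CremonaEquivalent.trans {A B C : Set (ProjSp k n)} (hA : HasGenericPoint k A)
    (hB : HasGenericPoint k B) (hC : HasGenericPoint k C) (h : CremonaEquivalent k A B)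
    (h' : CremonaEquivalent k B C) : CremonaEquivalent k A C :=
  let ⟨_, _, hF, hAB⟩ := h
  let ⟨_, _, hF', hBC⟩ := h'
  have hU := hasGenericPoint_univ (k := k) (n := n)
  ⟨_, _, hF.trans hU hU hU hF', hAB.trans hA hB hC hBC⟩

lemma CremonaEquivalent.congr {A A' B B' : Set (ProjSp k n)} (hA : HasGenericPoint k A)
    (hA' : HasGenericPoint k A') (hB : HasGenericPoint k B) (hB' : HasGenericPoint k B')
    (h : CremonaEquivalent k A A') (h' : CremonaEquivalent k B B') :
    CremonaEquivalent k A B ↔ CremonaEquivalent k A' B' :=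
  ⟨fun hAB => h.symm.trans hA' hA hB' (hAB.trans hA hB hB' h'),
    fun hAB => h.trans hA hA' hB (hAB.trans hA' hB' hB h'.symm)⟩

end BirationalMaps

section FunctionFields

variable {k : Type} [Field k] {n m : ℕ}

/-- Homogenization of `g` to degree `N` with respect to the variable `X 0`. -/
noncomputable def homogenize (N : ℕ) (g : MvPolynomial (Fin (n + 1)) k) :
    MvPolynomial (Fin (n + 1)) k :=
  ∑ i ∈ Finset.range (N + 1), homogeneousComponent i g * X 0 ^ (N - i)

lemma homogenize_isHomogeneous (N : ℕ) (g : MvPolynomial (Fin (n + 1)) k) :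
    (homogenize N g).IsHomogeneous N := by
  refine IsHomogeneous.sum _ _ _ fun i hi => ?_
  have hiN : i + (N - i) = N := Nat.add_sub_cancel' (Finset.mem_range_succ_iff.1 hi)
  simpa only [hiN] using
    (homogeneousComponent_isHomogeneous i g).mul (isHomogeneous_X_pow (R := k) 0 (N - i))

lemma aeval_homogenize {A : Type*} [CommRing A] [Algebra k A] {N : ℕ}
    {g : MvPolynomial (Fin (n + 1)) k} (hN : g.totalDegree ≤ N) {x : Fin (n + 1) → A}
    (hx : x 0 = 1) : aeval x (homogenize N g) = aeval x g := by
  conv_rhs => rw [← sum_homogeneousComponent g]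
  simp only [homogenize, map_sum, map_mul, map_pow, aeval_X, hx, one_pow, mul_one]
  refine (Finset.sum_subset (Finset.range_subset_range.2 (by omega)) fun i _ hi => ?_).symm
  rw [homogeneousComponent_eq_zero _ _ (by simpa using hi), map_zero]

/-- The rational map given by the polynomials `P i` on the affine chart `X 0 = 1`. -/
noncomputable def RatMap.ofAffine (P : Fin (m + 1) → MvPolynomial (Fin (n + 1)) k) :
    RatMap k n m where
  deg := ∑ i, (P i).totalDegree
  comp i := homogenize _ (P i)
  homog _ := homogenize_isHomogeneous _ _

lemma RatMap.evalAt_ofAffine {A : Type*} [CommRing A] [Algebra k A]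
    (P : Fin (m + 1) → MvPolynomial (Fin (n + 1)) k) {x : Fin (n + 1) → A} (hx : x 0 = 1) :
    (ofAffine P).evalAt x = fun i => aeval x (P i) :=
  funext fun i => aeval_homogenize (Finset.single_le_sum (f := fun i => (P i).totalDegree)
    (fun _ _ => Nat.zero_le _) (Finset.mem_univ i)) hx

variable {L L' : Type*} [Field L] [Algebra k L] [Field L'] [Algebra k L']

lemma IsSpecialization.aeval_eq_zero {ξ : Fin (n + 1) → L} {η : Fin (n + 1) → L'}
    (h : IsSpecialization k ξ η) (hξ : ξ 0 = 1) (hη : η 0 = 1)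
    {g : MvPolynomial (Fin (n + 1)) k} (hg : aeval ξ g = 0) : aeval η g = 0 := by
  rw [← aeval_homogenize le_rfl hη]
  exact h _ _ (homogenize_isHomogeneous _ g) ((aeval_homogenize le_rfl hξ).trans hg)

lemma ne_zero_of_zero_eq_one {ξ : Fin (n + 1) → L} (hξ : ξ 0 = 1) : ξ ≠ 0 := by
  rintro rfl
  exact zero_ne_one hξ

lemma exists_ratMap_of_mem_adjoin {ξ : Fin (n + 1) → L} (hξ : ξ 0 = 1) {η : Fin (m + 1) → L}
    (h : ∀ i, η i ∈ IntermediateField.adjoin k (Set.range ξ)) :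
    ∃ (F : RatMap k n m) (a : L), a ≠ 0 ∧ F.evalAt ξ = a • η := by
  have hfrac (i) : ∃ r s : MvPolynomial (Fin (n + 1)) k,
      aeval ξ s ≠ 0 ∧ η i * aeval ξ s = aeval ξ r := by
    obtain ⟨r, s, hrs⟩ := (IntermediateField.mem_adjoin_range_iff k ξ (η i)).1 (h i)
    by_cases hs : aeval ξ s = 0
    · exact ⟨0, 1, by simp, by simp [hrs, hs]⟩
    · exact ⟨r, s, hs, by rw [hrs, div_mul_cancel₀ _ hs]⟩
  choose r s hs hrs using hfrac
  refine ⟨RatMap.ofAffine fun i => r i * ∏ j ∈ Finset.univ.erase i, s j, ∏ j, aeval ξ (s j),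
    Finset.prod_ne_zero_iff.2 fun j _ => hs j, ?_⟩
  rw [RatMap.evalAt_ofAffine _ hξ]
  funext i
  rw [map_mul, map_prod, ← hrs, Pi.smul_apply, smul_eq_mul,
    ← Finset.mul_prod_erase Finset.univ _ (Finset.mem_univ i)]
  ring

lemma aeval_mem_adjoin_range {σ : Type*} (x : σ → L) (g : MvPolynomial σ k) :
    aeval x g ∈ IntermediateField.adjoin k (Set.range x) := by
  refine IntermediateField.algebra_adjoin_le_adjoin k _ ?_
  rw [Algebra.adjoin_range_eq_range_aeval]
  exact ⟨g, rfl⟩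

lemma adjoin_range_le_of_evalAt {ξ : Fin (n + 1) → L} {η : Fin (m + 1) → L} (hη : η 0 = 1)
    {F : RatMap k n m} {a : L} (ha : a ≠ 0) (h : F.evalAt ξ = a • η) :
    IntermediateField.adjoin k (Set.range η) ≤ IntermediateField.adjoin k (Set.range ξ) := by
  have hmem (i) : a * η i ∈ IntermediateField.adjoin k (Set.range ξ) := by
    have hi : F.evalAt ξ i = a * η i := congrFun h i
    exact hi ▸ aeval_mem_adjoin_range ξ (F.comp i)
  have ha' : a ∈ IntermediateField.adjoin k (Set.range ξ) := by simpa [hη] using hmem 0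
  rw [IntermediateField.adjoin_le_iff]
  rintro _ ⟨i, rfl⟩
  simpa [ha] using mul_mem (inv_mem ha') (hmem i)

/-- Varieties are birational iff their function fields are isomorphic; here the isomorphism is
expressed by a second generic point `η'` of the target generating the function field of the
source. -/
theorem birational_locus_iff [IsAlgClosed k] {ξ : Fin (n + 1) → L} {η : Fin (m + 1) → L'}
    (hξ : ξ 0 = 1) (hη : η 0 = 1) :
    Birational k (locus k ξ) (locus k η) ↔
      ∃ η' : Fin (m + 1) → L, η' 0 = 1 ∧ locus k η' = locus k η ∧
        IntermediateField.adjoin k (Set.range η') = IntermediateField.adjoin k (Set.range ξ) := by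
  have hξ0 := ne_zero_of_zero_eq_one hξ
  have hη0 := ne_zero_of_zero_eq_one hη
  constructor
  · rintro ⟨F, G, h⟩
    obtain ⟨hloc, -, b, hb, hGF⟩ := (isBirationalOn_locus_iff hξ0 hη0).1 h
    have hc : F.evalAt ξ 0 ≠ 0 := fun h0 => one_ne_zero <| hη.symm.trans <| by
      simpa using isSpecialization_of_locus_eq hη0 hloc 1 (X 0) (isHomogeneous_X k 0) (by simpa)
    set c := F.evalAt ξ 0
    have hη' : (c⁻¹ • F.evalAt ξ) 0 = 1 := inv_mul_cancel₀ hc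
    refine ⟨c⁻¹ • F.evalAt ξ, hη', (locus_smul (inv_ne_zero hc) _).trans hloc, ?_⟩
    refine (adjoin_range_le_of_evalAt hη' hc (F := F) (by rw [smul_inv_smul₀ hc])).antisymm
      (adjoin_range_le_of_evalAt hξ (F := G)
        (mul_ne_zero (pow_ne_zero G.deg (inv_ne_zero hc)) hb) ?_)
    rw [G.evalAt_smul, hGF, smul_smul]
  · rintro ⟨η', hη', hloc, hadj⟩
    obtain ⟨F, a, ha, hF⟩ := exists_ratMap_of_mem_adjoin hξ (η := η') fun i => by
      rw [← hadj]
      exact IntermediateField.subset_adjoin k _ ⟨i, rfl⟩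
    obtain ⟨G, b, hb, hG⟩ := exists_ratMap_of_mem_adjoin hη' (η := ξ) fun i => by
      rw [hadj]
      exact IntermediateField.subset_adjoin k _ ⟨i, rfl⟩
    refine ⟨F, G, (isBirationalOn_locus_iff hξ0 hη0).2 ⟨?_, ?_, a ^ G.deg * b,
      mul_ne_zero (pow_ne_zero _ ha) hb, ?_⟩⟩
    · rw [hF, locus_smul ha, hloc]
    · exact hF ▸ smul_ne_zero ha (ne_zero_of_zero_eq_one hη')
    · rw [hF, G.evalAt_smul, hG, smul_smul]

end FunctionFields

section LinearMaps

variable {k : Type} [Field k] {n : ℕ} {L L' : Type*} [Field L] [Algebra k L] [Field L']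
  [Algebra k L']

/-- The linear form with coefficients `η`. -/
noncomputable def linearForm (η : Fin (n + 1) → k) : MvPolynomial (Fin (n + 1)) k :=
  ∑ j, C (η j) * X j

lemma linearForm_isHomogeneous (η : Fin (n + 1) → k) : (linearForm η).IsHomogeneous 1 :=
  IsHomogeneous.sum _ _ _ fun _ _ => isHomogeneous_C_mul_X _ _

lemma aeval_linearForm {A : Type*} [CommRing A] [Algebra k A] (η : Fin (n + 1) → k)
    (x : Fin (n + 1) → A) : aeval x (linearForm η) = (algebraMap k A ∘ η) ⬝ᵥ x := by
  simp [linearForm, dotProduct]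

/-- The linear map `ℙⁿ ⇢ ℙⁿ` given by a matrix. -/
noncomputable def RatMap.ofMatrix (M : Matrix (Fin (n + 1)) (Fin (n + 1)) k) : RatMap k n n where
  deg := 1
  comp i := linearForm (M i)
  homog _ := linearForm_isHomogeneous _

lemma RatMap.evalAt_ofMatrix {A : Type*} [CommRing A] [Algebra k A]
    (M : Matrix (Fin (n + 1)) (Fin (n + 1)) k) (x : Fin (n + 1) → A) :
    (ofMatrix M).evalAt x = (M.map (algebraMap k A)).mulVec x := by
  funext i
  exact aeval_linearForm (M i) x

lemma RatMap.evalAt_ofMatrix_evalAt_ofMatrix {A : Type*} [CommRing A] [Algebra k A]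
    {M N : Matrix (Fin (n + 1)) (Fin (n + 1)) k} (h : N * M = 1) (x : Fin (n + 1) → A) :
    (ofMatrix N).evalAt ((ofMatrix M).evalAt x) = x := by
  rw [evalAt_ofMatrix, evalAt_ofMatrix, Matrix.mulVec_mulVec, ← Matrix.map_mul, h,
    Matrix.map_one _ (map_zero _) (map_one _), Matrix.one_mulVec]

lemma RatMap.evalAt_ofMatrix_ne_zero {M N : Matrix (Fin (n + 1)) (Fin (n + 1)) k} (h : N * M = 1)
    {x : Fin (n + 1) → L} (hx : x ≠ 0) : (ofMatrix M).evalAt x ≠ 0 := fun h0 => hx <| by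
  rw [← evalAt_ofMatrix_evalAt_ofMatrix h x, h0, evalAt_ofMatrix, Matrix.mulVec_zero]

variable [IsAlgClosed k]

lemma isBirationalOn_ofMatrix {M N : Matrix (Fin (n + 1)) (Fin (n + 1)) k} (h : N * M = 1)
    {ξ : Fin (n + 1) → L} (hξ : ξ ≠ 0) :
    IsBirationalOn k (RatMap.ofMatrix M) (RatMap.ofMatrix N) (locus k ξ)
      (locus k ((RatMap.ofMatrix M).evalAt ξ)) :=
  have hM := RatMap.evalAt_ofMatrix_ne_zero h hξ
  (isBirationalOn_locus_iff hξ hM).2 ⟨rfl, hM, 1, one_ne_zero, by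
    rw [RatMap.evalAt_ofMatrix_evalAt_ofMatrix h, one_smul]⟩

lemma cremonaEquivalent_ofMatrix {M N : Matrix (Fin (n + 1)) (Fin (n + 1)) k} (h : N * M = 1)
    {ξ : Fin (n + 1) → L} (hξ : ξ ≠ 0) :
    CremonaEquivalent k (locus k ξ) (locus k ((RatMap.ofMatrix M).evalAt ξ)) := by
  refine ⟨_, _, isBirationalOn_univ genericPoint_ne_zero locus_genericPoint one_ne_zero
    one_ne_zero ?_ ?_, isBirationalOn_ofMatrix h hξ⟩
  · rw [RatMap.evalAt_ofMatrix_evalAt_ofMatrix h, one_smul]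
  · rw [RatMap.evalAt_ofMatrix_evalAt_ofMatrix (mul_eq_one_comm.1 h), one_smul]

end LinearMaps

section FunctionFieldIsomorphisms

variable {k : Type} [Field k] {n m : ℕ} {L L' : Type} [Field L] [Algebra k L] [Field L']
  [Algebra k L']

lemma aeval_eq_zero_iff_of_locus_eq [IsAlgClosed k] {ξ : Fin (n + 1) → L} {η : Fin (n + 1) → L'}
    (hξ : ξ 0 = 1) (hη : η 0 = 1) (h : locus k ξ = locus k η) (g : MvPolynomial (Fin (n + 1)) k) :
    aeval ξ g = 0 ↔ aeval η g = 0 :=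
  ⟨(isSpecialization_of_locus_eq (ne_zero_of_zero_eq_one hη) h).aeval_eq_zero hξ hη,
    (isSpecialization_of_locus_eq (ne_zero_of_zero_eq_one hξ) h.symm).aeval_eq_zero hη hξ⟩

open scoped IntermediateField.algebraAdjoinAdjoin in
lemma nonempty_algEquiv_adjoin_range {σ : Type*} {x : σ → L} {y : σ → L'}
    (h : ∀ g : MvPolynomial σ k, aeval x g = 0 ↔ aeval y g = 0) :
    Nonempty (IntermediateField.adjoin k (Set.range x) ≃ₐ[k]
      IntermediateField.adjoin k (Set.range y)) := by
  have hker : RingHom.ker (aeval (R := k) x) = RingHom.ker (aeval (R := k) y) := Ideal.ext h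
  let e : Algebra.adjoin k (Set.range x) ≃ₐ[k] Algebra.adjoin k (Set.range y) :=
    (Subalgebra.equivOfEq _ _ (Algebra.adjoin_range_eq_range_aeval k x)).trans <|
      (Ideal.quotientKerEquivRange (aeval (R := k) x)).symm.trans <|
      (Ideal.quotientEquivAlgOfEq k hker).trans <|
      (Ideal.quotientKerEquivRange (aeval (R := k) y)).trans <|
      Subalgebra.equivOfEq _ _ (Algebra.adjoin_range_eq_range_aeval k y).symm
  exact ⟨IsFractionRing.fieldEquivOfAlgEquiv k _ _ e⟩

lemma adjoin_image_eq_top {S : Set L} (hS : IntermediateField.adjoin k S = ⊤) (e : L ≃ₐ[k] L') :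
    IntermediateField.adjoin k (e '' S) = ⊤ := by
  refine (IntermediateField.adjoin_map k S e.toAlgHom).symm.trans ?_
  rw [hS, ← AlgHom.fieldRange_eq_map, AlgHom.fieldRange_eq_top]
  exact e.surjective

theorem birational_locus_iff_nonempty_algEquiv [IsAlgClosed k] {ξ : Fin (n + 1) → L}
    {η : Fin (m + 1) → L'} (hξ : ξ 0 = 1) (hη : η 0 = 1)
    (hξ' : IntermediateField.adjoin k (Set.range ξ) = ⊤)
    (hη' : IntermediateField.adjoin k (Set.range η) = ⊤) :
    Birational k (locus k ξ) (locus k η) ↔ Nonempty (L ≃ₐ[k] L') := by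
  rw [birational_locus_iff hξ hη]
  constructor
  · rintro ⟨ζ, hζ, hloc, hadj⟩
    obtain ⟨e⟩ := nonempty_algEquiv_adjoin_range (aeval_eq_zero_iff_of_locus_eq hζ hη hloc)
    rw [hadj, hξ', hη'] at e
    exact ⟨IntermediateField.topEquiv.symm.trans (e.trans IntermediateField.topEquiv)⟩
  · rintro ⟨e⟩
    refine ⟨e.symm ∘ η, by simp [hη], locus_algHom_comp e.symm.toAlgHom η, ?_⟩
    rw [Set.range_comp, hξ', adjoin_image_eq_top hη' e.symm]

end FunctionFieldIsomorphisms

section Cones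

variable {k : Type} [Field k] {n d : ℕ} {L : Type} [Field L] [Algebra k L]
  {f : MvPolynomial (Fin (n + 1)) k} {ξ : Fin (n + 1) → L}

/-- `ξ` is a generic point of the affine hypersurface `f = 0`. -/
def IsGenericZero (f : MvPolynomial (Fin (n + 1)) k) (ξ : Fin (n + 1) → L) : Prop :=
  ∀ g, aeval ξ g = 0 ↔ f ∣ g

lemma exists_isGenericZero (hf : Irreducible f) :
    ∃ (L : Type) (_ : Field L) (_ : Algebra k L) (ξ : Fin (n + 1) → L), IsGenericZero f ξ := by
  let I := Ideal.span {f}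
  have hI : I.IsPrime := (Ideal.span_singleton_prime hf.ne_zero).2 hf.prime
  let φ := (IsScalarTower.toAlgHom k (MvPolynomial (Fin (n + 1)) k ⧸ I)
    (FractionRing (MvPolynomial (Fin (n + 1)) k ⧸ I))).comp (Ideal.Quotient.mkₐ k I)
  refine ⟨_, inferInstance, inferInstance, φ ∘ X, fun g => ?_⟩
  rw [aeval_algHom_comp, aeval_X_left_apply, ← Ideal.mem_span_singleton,
    ← Ideal.Quotient.eq_zero_iff_mem]
  exact FaithfulSMul.algebraMap_eq_zero_iff (MvPolynomial (Fin (n + 1)) k ⧸ I)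
    (FractionRing (MvPolynomial (Fin (n + 1)) k ⧸ I))

lemma IsGenericZero.aeval_self (h : IsGenericZero f ξ) : aeval ξ f = 0 :=
  (h f).2 dvd_rfl

lemma IsGenericZero.locus_eq_zeros (h : IsGenericZero f ξ) (hf : f.IsHomogeneous d) :
    locus k ξ = zeros k f := by
  refine Set.ext fun x => ⟨fun hx => mem_zeros_iff.2 (hx d f hf h.aeval_self),
    fun hx e g _ h0 => ?_⟩
  exact zero_dvd_iff.1 (mem_zeros_iff.1 hx ▸ map_dvd (aeval x.rep) ((h g).1 h0))

lemma irreducible_linearForm {η : Fin (n + 1) → k} (hη : η ≠ 0) : Irreducible (linearForm η) := by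
  classical
  have h0 : linearForm η ≠ 0 := fun h0 => hη <| funext fun i => by
    simpa [aeval_linearForm] using congrArg (aeval (Pi.single i (1 : k))) h0
  refine irreducible_of_totalDegree_eq_one ((linearForm_isHomogeneous η).totalDegree h0)
    fun x hx => ?_
  obtain ⟨m, hm⟩ := ne_zero_iff.1 h0
  exact isUnit_iff_ne_zero.2 (ne_zero_of_dvd_ne_zero hm (hx m))

/-- A hypersurface does not lie in the intersection of two distinct hyperplanes. -/
lemma IsGenericZero.dotProduct_eq_zero (h : IsGenericZero f ξ) {η θ : Fin (n + 1) → k} (hη : η ≠ 0)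
    (hξη : (algebraMap k L ∘ η) ⬝ᵥ ξ = 0) (hξθ : (algebraMap k L ∘ θ) ⬝ᵥ ξ = 0)
    {v : Fin (n + 1) → k} (hv : η ⬝ᵥ v = 0) :
    θ ⬝ᵥ v = 0 := by
  rw [← aeval_linearForm, h] at hξη hξθ
  have hunit : ¬ IsUnit f := fun hf => by simpa using (h 1).2 hf.dvd
  have hdvd : linearForm η ∣ linearForm θ :=
    (((irreducible_linearForm hη).dvd_iff.1 hξη).resolve_left hunit).dvd.trans hξθ
  simpa [aeval_linearForm, hv] using map_dvd (aeval v) hdvd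

lemma IsHyperplane.exists_linearForm {H : Set (ProjSp k n)} (hH : IsHyperplane k H)
    {p : ProjSp k n} (hp : p ∉ H) :
    ∃ η : Fin (n + 1) → k, η ⬝ᵥ p.rep = 1 ∧ H = zeros k (linearForm η) := by
  obtain ⟨ℓ, -, hℓ, rfl⟩ := hH
  rw [← mem_homogeneousSubmodule, homogeneousSubmodule_one_eq_span_X,
    Submodule.mem_span_range_iff_exists_fun] at hℓ
  obtain ⟨θ, hθ⟩ := hℓ
  obtain rfl : linearForm θ = ℓ := by simpa only [linearForm, ← smul_eq_C_mul] using hθ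
  have hmem (η : Fin (n + 1) → k) (x : ProjSp k n) :
      x ∈ zeros k (linearForm η) ↔ η ⬝ᵥ x.rep = 0 := by
    rw [mem_zeros_iff, aeval_linearForm]; rfl
  have hθp : θ ⬝ᵥ p.rep ≠ 0 := mt (hmem θ p).2 hp
  refine ⟨(θ ⬝ᵥ p.rep)⁻¹ • θ, ?_, Set.ext fun x => ?_⟩
  · rw [smul_dotProduct, smul_eq_mul, inv_mul_cancel₀ hθp]
  · simp [hmem, smul_dotProduct, hθp]

lemma IsConeWithVertex.aeval_sub_smul {p : ProjSp k n} (hf : f.IsHomogeneous d) (hd : d ≠ 0)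
    (h : IsConeWithVertex k (zeros k f) p) {v : Fin (n + 1) → k} (hv : aeval v f = 0) (c : k) :
    aeval (v - c • p.rep) f = 0 := by
  by_cases hw : v - c • p.rep = 0
  · rw [hw, ← zero_smul k (0 : Fin (n + 1) → k), aeval_smul_of_isHomogeneous hf, zero_pow hd,
      zero_mul]
  by_cases hv0 : v = 0
  · rw [hv0, zero_sub, ← neg_smul, aeval_smul_of_isHomogeneous hf, mem_zeros_iff.1 h.1, mul_zero]
  refine (mk_mem_zeros hf hw).1 (h.2 _ ((mk_mem_zeros hf hv0).2 hv) ?_)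
  rw [lineThrough, Set.mem_ofPred_eq, Projectivization.submodule_mk, Projectivization.submodule_mk,
    p.submodule_eq, Submodule.span_singleton_le_iff_mem]
  exact sub_mem (Submodule.mem_sup_right (Submodule.mem_span_singleton_self _))
    (Submodule.mem_sup_left (Submodule.smul_mem _ _ (Submodule.mem_span_singleton_self _)))

lemma eval_aeval_polynomial {σ : Type*} (Q : σ → Polynomial L) (g : MvPolynomial σ k) (t : L) :
    (aeval Q g).eval t = aeval (fun i => (Q i).eval t) g := by
  let φ : Polynomial L →ₐ[k] L := (Polynomial.aeval t).restrictScalars k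
  have hφ (q : Polynomial L) : φ q = q.eval t := Polynomial.coe_aeval_eq_eval t ▸ rfl
  simpa only [hφ, Function.comp_def] using (aeval_algHom_comp φ Q g).symm

/-- The linear map `x ↦ x - θ(x) P`. -/
noncomputable def RatMap.shear (P θ : Fin (n + 1) → k) : RatMap k n n where
  deg := 1
  comp j := X j - C (P j) * linearForm θ
  homog j := (isHomogeneous_X k j).sub ((linearForm_isHomogeneous θ).C_mul _)

lemma RatMap.aeval_aeval_shear {A : Type*} [CommRing A] [Algebra k A] (P θ : Fin (n + 1) → k)
    (g : MvPolynomial (Fin (n + 1)) k) (x : Fin (n + 1) → A) :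
    aeval x (aeval (shear P θ).comp g) =
      aeval (x - ((algebraMap k A ∘ θ) ⬝ᵥ x) • (algebraMap k A ∘ P)) g := by
  rw [aeval_aeval]
  congr 2
  funext j
  simp [shear, aeval_linearForm, mul_comm]

lemma IsGenericZero.aeval_sub_smul [IsAlgClosed k] (h : IsGenericZero f ξ)
    (hf : f.IsHomogeneous d) (hξ : ξ ≠ 0) {P : Fin (n + 1) → k}
    (hP : ∀ v : Fin (n + 1) → k, aeval v f = 0 → ∀ c : k, aeval (v - c • P) f = 0)
    {g : MvPolynomial (Fin (n + 1)) k} (hg : aeval ξ g = 0) (t : L) :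
    aeval (ξ - t • (algebraMap k L ∘ P)) g = 0 := by
  suffices hft : aeval (ξ - t • (algebraMap k L ∘ P)) f = 0 from
    zero_dvd_iff.1 (hft ▸ map_dvd _ ((h g).1 hg))
  obtain ⟨i, hi⟩ := Function.ne_iff.1 hξ
  have hshear (c : k) : aeval (ξ - (algebraMap k L c * ξ i) • (algebraMap k L ∘ P)) f = 0 := by
    have hc : (algebraMap k L ∘ Pi.single i c) ⬝ᵥ ξ = algebraMap k L c * ξ i := by
      simp [dotProduct, Pi.single_apply, apply_ite (algebraMap k L), ite_mul]
    rw [← hc, ← RatMap.aeval_aeval_shear, ← locus_subset_zeros_iff hξ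
      (hf.aeval _ (RatMap.shear P (Pi.single i c)).homog), h.locus_eq_zeros hf]
    intro x hx
    rw [mem_zeros_iff, RatMap.aeval_aeval_shear]
    exact hP _ (mem_zeros_iff.1 hx) _
  let Q : Fin (n + 1) → Polynomial L := fun j =>
    Polynomial.C (ξ j) - Polynomial.X * Polynomial.C (algebraMap k L (P j))
  have hQ (s : L) : (aeval Q f).eval s = aeval (ξ - s • (algebraMap k L ∘ P)) f := by
    rw [eval_aeval_polynomial]
    congr 2
    funext j
    simp [Q, mul_comm s]
  have hQ0 : aeval Q f = 0 := by
    refine Polynomial.eq_zero_of_infinite_isRoot _ <|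
      (Set.infinite_range_of_injective (f := fun c : k => algebraMap k L c * ξ i)
        fun a b hab => (algebraMap k L).injective (mul_right_cancel₀ hi hab)).mono ?_
    rintro _ ⟨c, rfl⟩
    exact (hQ _).trans (hshear c)
  rw [← hQ, hQ0, Polynomial.eval_zero]

lemma IsGenericZero.locus_sub_smul [IsAlgClosed k] (h : IsGenericZero f ξ)
    (hf : f.IsHomogeneous d) (hξ : ξ ≠ 0) {P η : Fin (n + 1) → k} (hη : η ⬝ᵥ P = 1)
    (hP : ∀ v : Fin (n + 1) → k, aeval v f = 0 → ∀ c : k, aeval (v - c • P) f = 0) :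
    locus k (ξ - ((algebraMap k L ∘ η) ⬝ᵥ ξ) • (algebraMap k L ∘ P)) =
      zeros k f ∩ zeros k (linearForm η) := by
  ext x
  constructor
  · intro hx
    refine ⟨mem_zeros_iff.2 (hx d f hf ?_),
      mem_zeros_iff.2 (hx 1 _ (linearForm_isHomogeneous η) ?_)⟩
    · exact h.aeval_sub_smul hf hξ hP h.aeval_self _
    · have hη' : (algebraMap k L ∘ η) ⬝ᵥ (algebraMap k L ∘ P) = 1 := by
        rw [← (algebraMap k L).map_dotProduct, hη, map_one]
      rw [aeval_linearForm, dotProduct_sub, dotProduct_smul, hη', smul_eq_mul, mul_one, sub_self]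
  · rintro ⟨hxf, hxη⟩ e g hg h0
    have hdvd : f ∣ aeval (RatMap.shear P η).comp g :=
      (h _).1 ((RatMap.aeval_aeval_shear P η g ξ).trans h0)
    have hx0 : aeval x.rep (aeval (RatMap.shear P η).comp g) = 0 :=
      zero_dvd_iff.1 (mem_zeros_iff.1 hxf ▸ map_dvd (aeval x.rep) hdvd)
    rw [mem_zeros_iff, aeval_linearForm] at hxη
    rwa [RatMap.aeval_aeval_shear, hxη, zero_smul, sub_zero] at hx0

end Cones

section PlaneModels

variable {k : Type} [Field k] {n d : ℕ} {K L : Type} [Field K] [Algebra k K] [Field L] [Algebra k L]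

lemma exists_linear_coordinates {P η : Fin (n + 1) → k} (hη : η ⬝ᵥ P = 1) :
    ∃ M N : Matrix (Fin (n + 1)) (Fin (n + 1)) k,
      N * M = 1 ∧ M.mulVec P = Pi.single (Fin.last n) 1 ∧ M (Fin.last n) = η := by
  let φ : Module.Dual k (Fin (n + 1) → k) := dotProductBilin k k η
  have hφ (v) : φ v = η ⬝ᵥ v := rfl
  have hφP : φ P = 1 := hη
  have hfin : Module.finrank k (LinearMap.ker φ) = n := by
    have hφ0 : φ ≠ 0 := fun h => by simp [h] at hφP
    have := Module.Dual.finrank_ker_add_one_of_ne_zero hφ0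
    rwa [Module.finrank_fin_fun, Nat.add_right_cancel_iff] at this
  let b := Module.finBasisOfFinrankEq k (LinearMap.ker φ) hfin
  let B := Module.Basis.mkFinSnoc b P
    (fun c x hx h => by simpa [LinearMap.mem_ker.1 hx, hφP] using congrArg φ h)
    fun z => ⟨-φ z, by simp [LinearMap.mem_ker, hφP]⟩
  have hBP : B (Fin.last n) = P := by simp [B]
  have hlast (v) : B.repr v (Fin.last n) = φ v := by
    conv_rhs => rw [← B.sum_repr v, map_sum, Fin.sum_univ_castSucc]
    simp [B, hφP]
  refine ⟨B.toMatrix (Pi.basisFun k _), (Pi.basisFun k _).toMatrix B,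
    Module.Basis.toMatrix_mul_toMatrix_flip _ _, ?_, ?_⟩
  · have hP := (Pi.basisFun k _).toMatrix_mulVec_repr B (B (Fin.last n))
    rwa [B.repr_self, Finsupp.single_eq_pi_single, hBP] at hP
  · funext j
    rw [Module.Basis.toMatrix_apply, hlast, hφ]
    simp

lemma aeval_ofMatrix_aeval_ofMatrix {M N : Matrix (Fin (n + 1)) (Fin (n + 1)) k} (hNM : N * M = 1)
    (g : MvPolynomial (Fin (n + 1)) k) :
    aeval (RatMap.ofMatrix M).comp (aeval (RatMap.ofMatrix N).comp g) = g := by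
  have hX : (RatMap.ofMatrix M).evalAt X = (RatMap.ofMatrix M).comp :=
    funext fun _ => aeval_X_left_apply _
  have h : (fun i => aeval (RatMap.ofMatrix M).comp ((RatMap.ofMatrix N).comp i)) = X :=
    hX ▸ RatMap.evalAt_ofMatrix_evalAt_ofMatrix hNM X
  rw [aeval_aeval, h, aeval_X_left_apply]

/-- `f` expressed in the linear coordinates `M x`, where `N` is the inverse of `M`. -/
lemma IsGenericZero.ofMatrix {f : MvPolynomial (Fin (n + 1)) k} {ξ : Fin (n + 1) → L}
    {M N : Matrix (Fin (n + 1)) (Fin (n + 1)) k} (h : IsGenericZero f ξ) (hNM : N * M = 1) :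
    IsGenericZero (aeval (RatMap.ofMatrix N).comp f) ((RatMap.ofMatrix M).evalAt ξ) := by
  intro g
  have hg : aeval ((RatMap.ofMatrix M).evalAt ξ) g = aeval ξ (aeval (RatMap.ofMatrix M).comp g) :=
    (aeval_aeval _ _ _).symm
  rw [hg, h]
  exact ⟨fun hdvd => aeval_ofMatrix_aeval_ofMatrix (mul_eq_one_comm.1 hNM) g ▸
      map_dvd (aeval (RatMap.ofMatrix N).comp) hdvd,
    fun hdvd => aeval_ofMatrix_aeval_ofMatrix hNM f ▸
      map_dvd (aeval (RatMap.ofMatrix M).comp) hdvd⟩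

lemma transcendental_of_notMem_range [IsAlgClosed k] {x : L}
    (hx : x ∉ Set.range (algebraMap k L)) : Transcendental k x := by
  refine fun h => hx ?_
  exact minpoly.mem_range_of_degree_eq_one k x
    (IsAlgClosed.degree_eq_one_of_irreducible k (minpoly.irreducible h.isIntegral))

variable {a b : K} {c d : L} {g : MvPolynomial (Fin 4) k}

/-- The point of the plane `X₃ = 0` in `ℙ³` with affine coordinates `(a, b)`. -/
def curvePoint {A : Type*} [CommRing A] (a b : A) : Fin 4 → A :=
  ![1, a, b, 0]

/-- The generic point of the line through `curvePoint a b` and the vertex `(0 : 0 : 0 : 1)`. -/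
noncomputable def conePoint (a b : K) : Fin 4 → RatFunc K :=
  ![1, RatFunc.C a, RatFunc.C b, RatFunc.X]

lemma aeval_conePoint_eq_zero_iff (φ : K →ₐ[k] L) {T : Set L} (hT : T.Infinite) :
    aeval (conePoint a b) g = 0 ↔ ∀ t ∈ T, aeval ![1, φ a, φ b, t] g = 0 := by
  let Q : Fin 4 → Polynomial K := ![1, Polynomial.C a, Polynomial.C b, Polynomial.X]
  have hcone : conePoint a b = (IsScalarTower.toAlgHom k (Polynomial K) (RatFunc K)) ∘ Q := by
    funext i
    fin_cases i <;> simp [conePoint, Q]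
  have heval (t : L) : (Polynomial.mapAlgHom φ (aeval Q g)).eval t = aeval ![1, φ a, φ b, t] g := by
    rw [← aeval_algHom_comp, eval_aeval_polynomial]
    congr 2
    funext i
    fin_cases i <;> simp [Q]
  have hzero : aeval (conePoint a b) g = 0 ↔ Polynomial.mapAlgHom φ (aeval Q g) = 0 := by
    rw [hcone, aeval_algHom_comp, IsScalarTower.toAlgHom_apply,
      FaithfulSMul.algebraMap_eq_zero_iff]
    exact (Polynomial.map_eq_zero_iff (f := (φ : K →+* L)) φ.injective).symm
  rw [hzero]
  refine ⟨fun h t _ => by rw [← heval, h, Polynomial.eval_zero], fun h => ?_⟩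
  exact Polynomial.eq_zero_of_infinite_isRoot _ (hT.mono fun t ht => (heval t).trans (h t ht))

lemma infinite_range_algebraMap [Infinite k] : (Set.range (algebraMap k L)).Infinite :=
  Set.infinite_range_of_injective (algebraMap k L).injective

lemma IsSpecialization.conePoint [Infinite k]
    (h : IsSpecialization k (curvePoint a b) (curvePoint c d)) :
    IsSpecialization k (conePoint a b) (conePoint c d) := by
  intro m g _ hg
  refine (aeval_conePoint_eq_zero_iff (AlgHom.id k L) (infinite_range_algebraMap (k := k))).2 ?_
  rintro _ ⟨e, rfl⟩
  have hslice {F : Type} [Field F] [Algebra k F] (x y : F) :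
      aeval (curvePoint x y) (aeval ![X 0, X 1, X 2, C e] g) =
        aeval ![1, x, y, algebraMap k F e] g := by
    rw [aeval_aeval]
    congr 2
    funext i
    fin_cases i <;> simp [curvePoint]
  rw [AlgHom.id_apply, AlgHom.id_apply, ← hslice]
  refine h.aeval_eq_zero rfl rfl ?_
  rw [hslice]
  exact (aeval_conePoint_eq_zero_iff (AlgHom.id k K) infinite_range_algebraMap).1 hg _ ⟨e, rfl⟩

lemma locus_conePoint_eq [IsAlgClosed k]
    (h : locus k (curvePoint a b) = locus k (curvePoint c d)) :
    locus k (conePoint a b) = locus k (conePoint c d) :=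
  (isSpecialization_of_locus_eq (ne_zero_of_zero_eq_one rfl) h).conePoint.locus_eq
    (isSpecialization_of_locus_eq (ne_zero_of_zero_eq_one rfl) h.symm).conePoint

end PlaneModels

section PlaneModelsOfCones

variable {k : Type} [Field k] {d : ℕ} {K L : Type} [Field K] [Algebra k K] [Field L] [Algebra k L]
  {f : MvPolynomial (Fin 4) k} {z : Fin 4 → L}

variable (k) in
/-- `K` is the function field of a plane curve over `k` on which the affine coordinates are
`a` and `b`, and `a` is not constant. -/
structure IsPlaneModel (a b : K) : Prop where
  transcendental : Transcendental k a
  trdeg_le_one : Algebra.trdeg k K ≤ 1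
  adjoin_eq_top : IntermediateField.adjoin k {a, b} = ⊤

lemma IsGenericZero.exists_perm_transcendental [IsAlgClosed k] (h : IsGenericZero f z) :
    ∃ σ : Equiv.Perm (Fin 4), σ 3 = 3 ∧ z (σ 0) ≠ 0 ∧ Transcendental k (z (σ 1) / z (σ 0)) := by
  have hcoord (j) (c : k) : (algebraMap k L ∘ Pi.single j c) ⬝ᵥ z = algebraMap k L c * z j := by
    simp [dotProduct, Pi.single_apply, apply_ite (algebraMap k L), ite_mul]
  have hsub (η θ : Fin 4 → k) :
      (algebraMap k L ∘ (η - θ)) = algebraMap k L ∘ η - algebraMap k L ∘ θ := by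
    ext; simp
  obtain ⟨i, hi3, hi⟩ : ∃ i : Fin 4, i ≠ 3 ∧ z i ≠ 0 := by
    by_contra! h0
    have := h.dotProduct_eq_zero (η := Pi.single 0 1) (θ := Pi.single 1 1)
      (v := Pi.single 1 1) (by simp) (by simp [hcoord, h0]) (by simp [hcoord, h0]) (by simp)
    simp at this
  let τ := Equiv.swap 0 i
  have hτ3 : τ 3 = 3 := Equiv.swap_apply_of_ne_of_ne (by decide) hi3.symm
  have hτ0 : z (τ 0) ≠ 0 := by simpa [τ]
  by_cases h1 : z (τ 1) / z (τ 0) ∈ Set.range (algebraMap k L)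
  swap
  · exact ⟨τ, hτ3, hτ0, transcendental_of_notMem_range h1⟩
  by_cases h2 : z (τ 2) / z (τ 0) ∈ Set.range (algebraMap k L)
  swap
  · exact ⟨(Equiv.swap 1 2).trans τ, hτ3, hτ0, transcendental_of_notMem_range h2⟩
  obtain ⟨c, hc⟩ := h1
  obtain ⟨e, he⟩ := h2
  rw [eq_div_iff hτ0] at hc he
  have h01 : τ 0 ≠ τ 1 := by simp
  have h02 : τ 0 ≠ τ 2 := by simp
  have h12 : τ 1 ≠ τ 2 := by simp
  have := h.dotProduct_eq_zero (η := Pi.single (τ 1) 1 - Pi.single (τ 0) c)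
    (θ := Pi.single (τ 2) 1 - Pi.single (τ 0) e) (v := Pi.single (τ 2) 1)
    (fun h0 => by simpa [h01.symm] using congrFun h0 (τ 1))
    (by rw [hsub, sub_dotProduct, hcoord, hcoord, hc]; simp)
    (by rw [hsub, sub_dotProduct, hcoord, hcoord, he]; simp)
    (by simp [h02.symm, h12.symm])
  simp [h02.symm] at this

lemma not_algebraicIndependent_of_cone [Infinite k] (hf0 : f ≠ 0) (hf : f.IsHomogeneous d)
    (hcone : ∀ v : Fin 4 → k, aeval v f = 0 → ∀ c : k, aeval (v - c • Pi.single 3 1) f = 0)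
    {a b : L} (hab : aeval (curvePoint a b) f = 0) : ¬ AlgebraicIndependent k ![a, b] := by
  have heval {A : Type} [CommRing A] [Algebra k A] (x y : A) :
      aeval ![x, y] (aeval (curvePoint (X 0) (X 1)) f : MvPolynomial (Fin 2) k) =
        aeval (curvePoint x y) f := by
    rw [aeval_aeval]
    congr 2
    funext i
    fin_cases i <;> simp [curvePoint]
  intro hind
  have hzero : (aeval (curvePoint (X 0) (X 1)) f : MvPolynomial (Fin 2) k) = 0 :=
    hind.eq_zero_of_aeval_eq_zero _ ((heval a b).trans hab)
  refine mul_ne_zero (X_ne_zero 0) hf0 (MvPolynomial.funext fun v => ?_)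
  rw [map_mul, eval_X, map_zero, mul_eq_zero, or_iff_not_imp_left]
  intro hv
  have hv' : v = v 0 • curvePoint (v 1 / v 0) (v 2 / v 0) - (-v 3) • Pi.single 3 1 := by
    funext i
    fin_cases i <;> simp [curvePoint, mul_div_cancel₀ _ hv]
  rw [← aeval_eq_eval, hv']
  refine hcone _ ?_ _
  rw [aeval_smul_of_isHomogeneous hf, ← heval, hzero, map_zero, mul_zero]

lemma trdeg_le_one_of_not_algebraicIndependent {a b : K}
    (htop : IntermediateField.adjoin k {a, b} = ⊤) (h : ¬ AlgebraicIndependent k ![a, b]) :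
    Algebra.trdeg k K ≤ 1 := by
  by_contra! hlt
  have htop' : IntermediateField.adjoin k (Set.range ![a, b]) = ⊤ := by
    rwa [Matrix.range_cons_cons_empty]
  have : Algebra.IsAlgebraic (Algebra.adjoin k (Set.range ![a, b])) K := by
    rw [← IntermediateField.isAlgebraic_adjoin_iff_top, htop']
    exact ⟨fun x => isAlgebraic_algebraMap (⟨x, trivial⟩ : (⊤ : IntermediateField k K))⟩
  refine h (Algebra.IsAlgebraic.isTranscendenceBasis_of_le_trdeg_of_finite k ![a, b] ?_).1
  have hle : (2 : Cardinal) ≤ Algebra.trdeg k K := by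
    rw [← one_add_one_eq_two]
    exact Cardinal.add_one_le_of_lt hlt
  simpa using hle

lemma locus_eq_locus_conePoint [IsAlgClosed k] (hz : z 0 ≠ 0)
    (hcone : ∀ g : MvPolynomial (Fin 4) k, aeval z g = 0 →
      ∀ t : L, aeval (z - t • Pi.single 3 1) g = 0)
    (φ : K →ₐ[k] L) {a b : K} (ha : φ a = z 1 / z 0) (hb : φ b = z 2 / z 0) :
    locus k z = locus k (conePoint a b) := by
  have hline (t : L) : z 0 • ![1, φ a, φ b, t] = z - (z 3 - z 0 * t) • Pi.single 3 1 := by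
    funext i
    fin_cases i <;> simp [ha, hb, mul_div_cancel₀ _ hz]
  have hinf : (Set.range (algebraMap k L)).Infinite := infinite_range_algebraMap (k := k)
  have hinf' : (Set.univ : Set L).Infinite := hinf.mono (Set.subset_univ _)
  refine IsSpecialization.locus_eq (fun m g hg h0 => ?_) fun m g hg h0 => ?_
  · rw [aeval_conePoint_eq_zero_iff φ hinf']
    intro t _
    rw [← aeval_smul_eq_zero_iff hz hg, hline]
    exact hcone g h0 _
  · have := (aeval_conePoint_eq_zero_iff φ hinf').1 h0 (z 3 / z 0) trivial
    rwa [← aeval_smul_eq_zero_iff hz hg, hline, mul_div_cancel₀ _ hz, sub_self, zero_smul,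
      sub_zero] at this

lemma IsGenericZero.exists_adapted_coordinates [IsAlgClosed k] (h : IsGenericZero f z)
    {P η : Fin 4 → k} (hη : η ⬝ᵥ P = 1) :
    ∃ M N : Matrix (Fin 4) (Fin 4) k, N * M = 1 ∧ M.mulVec P = Pi.single 3 1 ∧ M 3 = η ∧
      (RatMap.ofMatrix M).evalAt z 0 ≠ 0 ∧
      Transcendental k ((RatMap.ofMatrix M).evalAt z 1 / (RatMap.ofMatrix M).evalAt z 0) := by
  obtain ⟨M, N, hNM, hMP, hMη⟩ := exists_linear_coordinates hη
  obtain ⟨σ, hσ3, hσ0, hσ1⟩ := (h.ofMatrix hNM).exists_perm_transcendental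
  refine ⟨M.submatrix σ id, N.submatrix id σ, ?_, ?_, ?_, hσ0, hσ1⟩
  · rw [Matrix.submatrix_mul_equiv, hNM, Matrix.submatrix_id_id]
  · funext i
    exact (congrFun hMP (σ i)).trans
      (by simp [Pi.single_apply, Fin.last, σ.injective.eq_iff' hσ3])
  · exact (congrArg M hσ3).trans hMη

lemma exists_algHom_adjoin_pair_eq_top (x y : L) :
    ∃ (K : Type) (_ : Field K) (_ : Algebra k K) (φ : K →ₐ[k] L) (a b : K),
      φ a = x ∧ φ b = y ∧ IntermediateField.adjoin k {a, b} = ⊤ := by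
  let E := IntermediateField.adjoin k {x, y}
  let a : E := ⟨x, IntermediateField.subset_adjoin k _ (Set.mem_insert _ _)⟩
  let b : E := ⟨y, IntermediateField.subset_adjoin k _ (Set.mem_insert_of_mem _ rfl)⟩
  refine ⟨E, inferInstance, inferInstance, E.val, a, b, rfl, rfl,
    IntermediateField.map_injective E.val ?_⟩
  rw [IntermediateField.adjoin_map, Set.image_pair, ← AlgHom.fieldRange_eq_map, E.fieldRange_val]
  rfl

lemma IsGenericZero.exists_isPlaneModel [IsAlgClosed k] (h : IsGenericZero f z) (hf0 : f ≠ 0)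
    (hf : f.IsHomogeneous d)
    (hcone : ∀ v : Fin 4 → k, aeval v f = 0 → ∀ c : k, aeval (v - c • Pi.single 3 1) f = 0)
    (hz0 : z 0 ≠ 0) (hz1 : Transcendental k (z 1 / z 0)) :
    ∃ (K : Type) (_ : Field K) (_ : Algebra k K) (a b : K), IsPlaneModel k a b ∧
      locus k (z - z 3 • Pi.single 3 1) = locus k (curvePoint a b) ∧
      locus k z = locus k (conePoint a b) := by
  obtain ⟨K, _, _, φ, a, b, ha, hb, htop⟩ :=
    exists_algHom_adjoin_pair_eq_top (k := k) (z 1 / z 0) (z 2 / z 0)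
  have hline (g : MvPolynomial (Fin 4) k) (hg : aeval z g = 0) (t : L) :
      aeval (z - t • Pi.single 3 1) g = 0 := by
    have hsingle : algebraMap k L ∘ Pi.single 3 1 = (Pi.single 3 1 : Fin 4 → L) := by
      funext i
      simp [Pi.single_apply, apply_ite (algebraMap k L)]
    exact hsingle ▸ h.aeval_sub_smul hf (Function.ne_iff.2 ⟨0, hz0⟩) hcone hg t
  have hproj : z - z 3 • Pi.single 3 1 = z 0 • (φ ∘ curvePoint a b) := by
    funext i
    fin_cases i <;> simp [curvePoint, ha, hb, mul_div_cancel₀ _ hz0]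
  have hab : aeval (curvePoint a b) f = 0 := by
    rw [← map_eq_zero φ, ← aeval_algHom_comp, ← aeval_smul_eq_zero_iff hz0 hf, ← hproj]
    exact hline f h.aeval_self _
  refine ⟨K, _, _, a, b, ⟨fun hk => hz1 (ha ▸ hk.algHom φ),
    trdeg_le_one_of_not_algebraicIndependent htop
      (not_algebraicIndependent_of_cone hf0 hf hcone hab), htop⟩, ?_,
    locus_eq_locus_conePoint hz0 hline φ ha hb⟩
  rw [hproj, locus_smul hz0, locus_algHom_comp]

lemma aeval_aeval_ofMatrix_sub_smul {M N : Matrix (Fin 4) (Fin 4) k} (hNM : N * M = 1)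
    {P e : Fin 4 → k} (hMP : M.mulVec P = e)
    (hP : ∀ v : Fin 4 → k, aeval v f = 0 → ∀ c : k, aeval (v - c • P) f = 0)
    (v : Fin 4 → k) (hv : aeval v (aeval (RatMap.ofMatrix N).comp f) = 0) (c : k) :
    aeval (v - c • e) (aeval (RatMap.ofMatrix N).comp f) = 0 := by
  have hN (w : Fin 4 → k) : aeval w (aeval (RatMap.ofMatrix N).comp f) = aeval (N.mulVec w) f :=
    (aeval_aeval _ _ _).trans (congrArg (aeval · f) (RatMap.evalAt_ofMatrix N w))
  have hNe : N.mulVec e = P := by rw [← hMP, Matrix.mulVec_mulVec, hNM, Matrix.one_mulVec]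
  rw [hN] at hv
  rw [hN, Matrix.mulVec_sub, Matrix.mulVec_smul, hNe]
  exact hP _ hv c

theorem IsConeWithVertex.exists_isPlaneModel [IsAlgClosed k] {S H : Set (ProjSp k 3)}
    {p : ProjSp k 3} (hcone : IsConeWithVertex k S p) (hS : IsIrredDivisor k S)
    (hH : IsHyperplane k H) (hp : p ∉ H) :
    HasGenericPoint k S ∧ HasGenericPoint k (S ∩ H) ∧
      ∃ (K : Type) (_ : Field K) (_ : Algebra k K) (a b : K), IsPlaneModel k a b ∧
        Birational k (S ∩ H) (locus k (curvePoint a b)) ∧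
        CremonaEquivalent k S (locus k (conePoint a b)) := by
  obtain ⟨d, f, hd, hf, hirr, rfl⟩ := hS
  obtain ⟨η, hη, rfl⟩ := hH.exists_linearForm hp
  obtain ⟨L, _, _, ξ, hξ⟩ := exists_isGenericZero hirr
  obtain ⟨M, N, hNM, hMp, hMη, hz0, hz1⟩ := hξ.exists_adapted_coordinates hη
  have hξ0 : ξ ≠ 0 := by
    rintro rfl
    simp [RatMap.evalAt_ofMatrix] at hz0
  have hP (v : Fin 4 → k) (hv : aeval v f = 0) (c : k) := hcone.aeval_sub_smul hf hd.ne' hv c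
  have hf' : aeval (RatMap.ofMatrix N).comp f ≠ 0 := fun h0 => hirr.ne_zero <| by
    rw [← aeval_ofMatrix_aeval_ofMatrix hNM f, h0, map_zero]
  obtain ⟨K, _, _, a, b, hab, hcurve, hsurf⟩ := (hξ.ofMatrix hNM).exists_isPlaneModel hf'
    (hf.aeval _ (RatMap.ofMatrix N).homog) (aeval_aeval_ofMatrix_sub_smul hNM hMp hP) hz0 hz1
  set ζ := ξ - ((algebraMap k L ∘ η) ⬝ᵥ ξ) • (algebraMap k L ∘ p.rep)
  have hζ : locus k ζ = zeros k f ∩ zeros k (linearForm η) := hξ.locus_sub_smul hf hξ0 hη hP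
  have hMζ : (RatMap.ofMatrix M).evalAt ζ = (RatMap.ofMatrix M).evalAt ξ -
      (RatMap.ofMatrix M).evalAt ξ 3 • Pi.single 3 1 := by
    have hsingle : (M.map (algebraMap k L)).mulVec (algebraMap k L ∘ p.rep) = Pi.single 3 1 := by
      funext i
      rw [← RingHom.map_mulVec, hMp]
      simp [Pi.single_apply, apply_ite (algebraMap k L)]
    have hlast : (M.map (algebraMap k L)).mulVec ξ 3 = (algebraMap k L ∘ η) ⬝ᵥ ξ := by
      rw [← hMη]
      rfl
    rw [RatMap.evalAt_ofMatrix, RatMap.evalAt_ofMatrix, Matrix.mulVec_sub, Matrix.mulVec_smul,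
      hsingle, hlast]
  have hζ0 : ζ ≠ 0 := by
    intro h0
    have := congrFun hMζ 0
    rw [h0, RatMap.evalAt_ofMatrix, Matrix.mulVec_zero] at this
    exact hz0 (by simpa using this.symm)
  rw [← hMζ] at hcurve
  rw [← hζ, ← hξ.locus_eq_zeros hf]
  exact ⟨hasGenericPoint_locus hξ0, hasGenericPoint_locus hζ0, K, _, _, a, b, hab,
    hcurve ▸ ⟨_, _, isBirationalOn_ofMatrix hNM hζ0⟩,
    hsurf ▸ cremonaEquivalent_ofMatrix hNM hξ0⟩

end PlaneModelsOfCones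

section ElementaryMaps

variable {E A : Type*} [Field E] [Field A] [Algebra E A] {f g B C r G : Polynomial E}
  {D : MvPolynomial (Fin 2) E} {y z w s : A}

/-- The polynomial `C(y) + z f(y)` in the variables `y = X 0` and `z = X 1`. -/
noncomputable def shearPolynomial (C f : Polynomial E) : MvPolynomial (Fin 2) E :=
  Polynomial.aeval (X 0) C + X 1 * Polynomial.aeval (X 0) f

lemma aeval_polynomial_aeval (P : Polynomial E) (D : MvPolynomial (Fin 2) E) (y z : A) :
    aeval ![y, z] (Polynomial.aeval D P) = Polynomial.aeval (aeval ![y, z] D) P :=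
  (Polynomial.aeval_algHom_apply _ _ _).symm

lemma aeval_polynomial_aeval_X (P : Polynomial E) (y z : A) :
    aeval ![y, z] (Polynomial.aeval (X 0 : MvPolynomial (Fin 2) E) P) = Polynomial.aeval y P := by
  rw [aeval_polynomial_aeval, aeval_X]
  rfl

lemma aeval_shearPolynomial (C f : Polynomial E) (y z : A) :
    aeval ![y, z] (shearPolynomial C f) = Polynomial.aeval y C + z * Polynomial.aeval y f := by
  rw [shearPolynomial, map_add, map_mul, aeval_X, aeval_polynomial_aeval_X,
    aeval_polynomial_aeval_X]
  rfl

lemma dvd_aeval_shearPolynomial (h : f ∣ r + G.comp C) :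
    Polynomial.aeval (X 0) f ∣
      Polynomial.aeval (X 0) r + Polynomial.aeval (shearPolynomial C f) G := by
  have hG := map_dvd (Polynomial.aeval (X 0 : MvPolynomial (Fin 2) E)) h
  rw [map_add, Polynomial.aeval_comp] at hG
  have hsub : Polynomial.aeval (X 0) f ∣ Polynomial.aeval (shearPolynomial C f) G -
      Polynomial.aeval (Polynomial.aeval (X 0 : MvPolynomial (Fin 2) E) C) G := by
    simp only [← Polynomial.eval_map_algebraMap]
    refine dvd_trans ?_ (Polynomial.sub_dvd_eval_sub _ _ _)
    exact ⟨X 1, by simp only [shearPolynomial, Polynomial.eval_map_algebraMap]; ring⟩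
  simpa using hG.add hsub

lemma aeval_quotient_eq (hD : Polynomial.aeval (X 0) r + Polynomial.aeval (shearPolynomial C f) G =
      Polynomial.aeval (X 0) f * D) (y z : A) :
    Polynomial.aeval y r + Polynomial.aeval (Polynomial.aeval y C + z * Polynomial.aeval y f) G =
      Polynomial.aeval y f * aeval ![y, z] D := by
  simpa only [map_add, map_mul, aeval_polynomial_aeval, aeval_shearPolynomial, aeval_X,
    Matrix.cons_val_zero] using congrArg (aeval ![y, z]) hD

/-- L'Hôpital's rule: differentiate with respect to `y` and evaluate at a zero of `f`. -/
lemma derivative_mul_aeval_quotient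
    (hD : Polynomial.aeval (X 0) r + Polynomial.aeval (shearPolynomial C f) G =
      Polynomial.aeval (X 0) f * D) (hf : Polynomial.aeval y f = 0) (z : A) :
    Polynomial.aeval y f.derivative * aeval ![y, z] D = Polynomial.aeval y r.derivative +
      Polynomial.aeval (Polynomial.aeval y C) G.derivative *
        (Polynomial.aeval y C.derivative + z * Polynomial.aeval y f.derivative) := by
  have h := congrArg (fun P => aeval ![y, z] (pderiv 0 P)) hD
  simp only [shearPolynomial, map_add, Derivation.leibniz, Derivation.map_aeval, smul_eq_mul,
    pderiv_X_self, pderiv_X_of_ne one_ne_zero, map_mul, aeval_polynomial_aeval, aeval_X, hf,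
    Matrix.cons_val_zero, Matrix.cons_val_one, mul_zero, mul_one, add_zero, zero_mul, zero_add] at h
  linear_combination -h

variable (f g B C) in
/-- The elementary birational map `(y, z) ↦ (w, s)` of the plane with `w = C(y) + z f(y)` and
`s = num / den`, whose inverse has the same shape: `y = B(w) + s g(w)`. -/
structure ElementaryMap where
  /-- the numerator of `s` -/
  num : MvPolynomial (Fin 2) E
  /-- the denominator of `s` -/
  den : MvPolynomial (Fin 2) E
  num_spec : Polynomial.aeval (X 0) (Polynomial.X : Polynomial E) +
      Polynomial.aeval (shearPolynomial C f) (-B) =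
    Polynomial.aeval (X 0) f * num
  den_spec : Polynomial.aeval (X 0) (0 : Polynomial E) + Polynomial.aeval (shearPolynomial C f) g =
    Polynomial.aeval (X 0) f * den

/-- `T` is defined at `(y, z)`, where its value is `(w, s)`. -/
structure ElementaryMap.MapsTo (T : ElementaryMap f g B C) (y z w s : A) : Prop where
  shear_eq : Polynomial.aeval y C + z * Polynomial.aeval y f = w
  num_eq : aeval ![y, z] T.num = s * aeval ![y, z] T.den
  den_ne_zero : aeval ![y, z] T.den ≠ 0

lemma nonempty_elementaryMap (hB : f ∣ Polynomial.X - B.comp C) (hg : f ∣ g.comp C) :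
    Nonempty (ElementaryMap f g B C) := by
  obtain ⟨num, hnum⟩ := dvd_aeval_shearPolynomial (f := f) (C := C) (r := Polynomial.X)
    (G := -B) (by rwa [Polynomial.neg_comp, ← sub_eq_add_neg])
  obtain ⟨den, hden⟩ := dvd_aeval_shearPolynomial (f := f) (C := C) (r := 0) (G := g)
    (by rwa [zero_add])
  exact ⟨⟨num, den, hnum, hden⟩⟩

lemma ElementaryMap.num_aeval (T : ElementaryMap f g B C) (y z : A) :
    y - Polynomial.aeval (Polynomial.aeval y C + z * Polynomial.aeval y f) B =
      Polynomial.aeval y f * aeval ![y, z] T.num := by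
  simpa [← sub_eq_add_neg] using aeval_quotient_eq T.num_spec y z

lemma ElementaryMap.den_aeval (T : ElementaryMap f g B C) (y z : A) :
    Polynomial.aeval (Polynomial.aeval y C + z * Polynomial.aeval y f) g =
      Polynomial.aeval y f * aeval ![y, z] T.den := by
  simpa using aeval_quotient_eq T.den_spec y z

lemma ElementaryMap.exists_mapsTo_of_ne_zero (T : ElementaryMap f g B C)
    (T' : ElementaryMap g f C B) (hf : Polynomial.aeval y f ≠ 0)
    (hden : aeval ![y, z] T.den ≠ 0) : ∃ w s : A, T.MapsTo y z w s ∧ T'.MapsTo w s y z := by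
  obtain ⟨w, hw⟩ : ∃ w, Polynomial.aeval y C + z * Polynomial.aeval y f = w := ⟨_, rfl⟩
  obtain ⟨s, hs⟩ : ∃ s, aeval ![y, z] T.num / aeval ![y, z] T.den = s := ⟨_, rfl⟩
  have hg := T.den_aeval y z
  have hB := T.num_aeval y z
  rw [hw] at hg hB
  rw [div_eq_iff hden] at hs
  have hy : Polynomial.aeval w B + s * Polynomial.aeval w g = y := by
    linear_combination s * hg - hB - Polynomial.aeval y f * hs
  have hden' := T'.den_aeval w s
  have hnum' := T'.num_aeval w s
  rw [hy, hg] at hden' hnum'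
  have hdd : aeval ![y, z] T.den * aeval ![w, s] T'.den = 1 :=
    mul_left_cancel₀ hf (by linear_combination -hden')
  have hdn : aeval ![y, z] T.den * aeval ![w, s] T'.num = z :=
    mul_left_cancel₀ hf (by linear_combination -hnum' - hw)
  refine ⟨w, s, ⟨hw, hs, hden⟩, ⟨hy, mul_left_cancel₀ hden ?_, right_ne_zero_of_mul_eq_one hdd⟩⟩
  linear_combination hdn - z * hdd

lemma ElementaryMap.exists_mapsTo_of_eq_zero (T : ElementaryMap f g B C)
    (T' : ElementaryMap g f C B) (hf : Polynomial.aeval y f = 0) (hC : Polynomial.aeval y C = w)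
    (hg : Polynomial.aeval w g = 0) (hB : Polynomial.aeval w B = y)
    (hf' : Polynomial.aeval y f.derivative ≠ 0) (hg' : Polynomial.aeval w g.derivative ≠ 0)
    (hρ : Polynomial.aeval y C.derivative + z * Polynomial.aeval y f.derivative ≠ 0) :
    ∃ s : A, T.MapsTo y z w s ∧ T'.MapsTo w s y z ∧
      (Polynomial.aeval w B.derivative + s * Polynomial.aeval w g.derivative) *
        (Polynomial.aeval y C.derivative + z * Polynomial.aeval y f.derivative) = 1 := by
  have hden := derivative_mul_aeval_quotient T.den_spec hf z
  have hnum := derivative_mul_aeval_quotient T.num_spec hf z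
  simp only [hC, map_zero, zero_add, Polynomial.derivative_X, map_one,
    map_neg] at hden hnum
  obtain ⟨s, hs⟩ : ∃ s, aeval ![y, z] T.num / aeval ![y, z] T.den = s := ⟨_, rfl⟩
  have hden0 : aeval ![y, z] T.den ≠ 0 :=
    right_ne_zero_of_mul (hden.trans_ne (mul_ne_zero hg' hρ))
  rw [div_eq_iff hden0] at hs
  have hinv : (Polynomial.aeval w B.derivative + s * Polynomial.aeval w g.derivative) *
      (Polynomial.aeval y C.derivative + z * Polynomial.aeval y f.derivative) = 1 := by
    linear_combination hnum - s * hden - Polynomial.aeval y f.derivative * hs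
  have hden' := derivative_mul_aeval_quotient T'.den_spec hg s
  have hnum' := derivative_mul_aeval_quotient T'.num_spec hg s
  simp only [hB, map_zero, zero_add, Polynomial.derivative_X, map_one,
    map_neg] at hden' hnum'
  refine ⟨s, ⟨by rw [hC, hf, mul_zero, add_zero], hs, hden0⟩,
    ⟨by rw [hB, hg, mul_zero, add_zero], mul_left_cancel₀ hg' ?_, ?_⟩, hinv⟩
  · linear_combination hnum' - z * hden' - hinv
  · exact right_ne_zero_of_mul (hden'.trans_ne (mul_ne_zero hf' (left_ne_zero_of_mul_eq_one hinv)))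

end ElementaryMaps

section ElementaryCremonaMaps

variable {k : Type} [Field k] {K : Type} [Field K] [Algebra k K]

lemma locus_eq_univ_of_algebraicIndependent [IsAlgClosed k] {n : ℕ} {x : Fin n → K}
    (hx : AlgebraicIndependent k x) : locus k (Fin.cons 1 x : Fin (n + 1) → K) = Set.univ := by
  rw [← locus_genericPoint]
  refine IsSpecialization.locus_eq (fun d g hg h0 => ?_) (isSpecialization_genericPoint _)
  rw [aeval_genericPoint_eq_zero_iff]
  have hcons {A : Type} [CommRing A] [Algebra k A] (y : Fin n → A) :
      aeval y (aeval (Fin.cons 1 X : Fin (n + 1) → MvPolynomial (Fin n) k) g) =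
        aeval (Fin.cons 1 y : Fin (n + 1) → A) g := by
    rw [aeval_aeval]
    congr 2
    funext i
    cases i using Fin.cases <;> simp
  have hzero := hx.eq_zero_of_aeval_eq_zero _ ((hcons x).trans h0)
  refine (mul_eq_zero.1 (MvPolynomial.funext fun v => ?_ : X 0 * g = 0)).resolve_left (X_ne_zero 0)
  rw [map_mul, eval_X, map_zero, mul_eq_zero, or_iff_not_imp_left]
  intro hv
  have hv' : v 0 • (Fin.cons 1 fun i => (v 0)⁻¹ * v i.succ : Fin (n + 1) → k) = v := by
    funext i
    cases i using Fin.cases <;> simp [hv]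
  change aeval v g = 0
  rw [← hv', aeval_smul_of_isHomogeneous hg, ← hcons, hzero,
    map_zero, mul_zero]

open scoped IntermediateField IntermediateField.algebraAdjoinAdjoin

lemma C_mem_range_aeval {a : K} (r : Algebra.adjoin k {a}) :
    C (algebraMap _ k⟮a⟯ r) ∈ (aeval ![1, C (IntermediateField.AdjoinSimple.gen k a),
      X 0, X 1] : MvPolynomial (Fin 4) k →ₐ[k] MvPolynomial (Fin 2) k⟮a⟯).range := by
  obtain ⟨r, hr⟩ := r
  obtain ⟨q, rfl⟩ := Algebra.adjoin_singleton_eq_range_aeval k a ▸ hr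
  refine ⟨Polynomial.aeval (X 1) q, ?_⟩
  have hq : algebraMap (Algebra.adjoin k {a}) k⟮a⟯ ⟨_, hr⟩ =
      Polynomial.aeval (IntermediateField.AdjoinSimple.gen k a) q :=
    Subtype.ext (Polynomial.aeval_algebraMap_apply K (IntermediateField.AdjoinSimple.gen k a) q)
  rw [hq]
  change aeval _ (Polynomial.aeval (X 1) q) = _
  rw [← Polynomial.aeval_algHom_apply, aeval_X]
  exact Polynomial.aeval_algebraMap_apply _ _ q

lemma exists_ratMap_of_adjoin_simple (a : K) (P : Fin 4 → MvPolynomial (Fin 2) k⟮a⟯) :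
    ∃ (F : RatMap k 3 3) (e : k⟮a⟯), e ≠ 0 ∧ ∀ {A : Type} [Field A] [Algebra k A] [Algebra k⟮a⟯ A]
      [IsScalarTower k k⟮a⟯ A] (y z : A),
      F.evalAt ![1, algebraMap k⟮a⟯ A (IntermediateField.AdjoinSimple.gen k a), y, z] =
        algebraMap k⟮a⟯ A e • fun i => aeval ![y, z] (P i) := by
  obtain ⟨d, hd⟩ := IsLocalization.exist_integer_multiples (nonZeroDivisors (Algebra.adjoin k {a}))
    (Finset.univ.sigma fun i => (P i).support) fun i => coeff i.2 (P i.1)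
  let e := algebraMap _ k⟮a⟯ d.1
  let v : Fin 4 → MvPolynomial (Fin 2) k⟮a⟯ :=
    ![1, C (IntermediateField.AdjoinSimple.gen k a), X 0, X 1]
  have hP (i) : ∃ Q : MvPolynomial (Fin 4) k, aeval v Q = C e * P i := by
    rw [(P i).as_sum, Finset.mul_sum]
    refine sum_mem (S := (aeval v : MvPolynomial (Fin 4) k →ₐ[k] _).range) fun m hm => ?_
    obtain ⟨r, hr⟩ := hd ⟨i, m⟩ (by simpa using hm)
    rw [monomial_eq, ← mul_assoc, ← map_mul]
    rw [Algebra.smul_def] at hr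
    refine mul_mem (hr ▸ C_mem_range_aeval r) (prod_mem fun j _ => pow_mem ?_ _)
    fin_cases j
    exacts [⟨X 2, by simp [v]⟩, ⟨X 3, by simp [v]⟩]
  choose Q hQ using hP
  refine ⟨.ofAffine Q, e, ?_, fun {A} _ _ _ _ y z => ?_⟩
  · exact (map_ne_zero_iff _ (FaithfulSMul.algebraMap_injective _ _)).2
      (nonZeroDivisors.coe_ne_zero d)
  rw [RatMap.evalAt_ofAffine _ rfl]
  funext i
  have := congrArg (aeval ![y, z]) (hQ i)
  rw [map_mul, aeval_C, ← AlgHom.restrictScalars_apply k, ← aeval_algHom_comp] at this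
  rw [Pi.smul_apply, smul_eq_mul, ← this]
  congr 2
  funext j
  fin_cases j <;> simp [v]

/-- The rational map `F` of `ℙ³` is `T` on the planes `X 1 = a`, where the coefficients of `T` lie
in `k(a)`. -/
def ElementaryMap.IsRealizedBy {a : K} {f g B C : Polynomial k⟮a⟯} (T : ElementaryMap f g B C)
    (F : RatMap k 3 3) : Prop :=
  ∀ {A : Type} [Field A] [Algebra k A] [Algebra k⟮a⟯ A] [IsScalarTower k k⟮a⟯ A] {y z w s : A},
    T.MapsTo y z w s → ∃ e : A, e ≠ 0 ∧
      F.evalAt ![1, algebraMap k⟮a⟯ A (IntermediateField.AdjoinSimple.gen k a), y, z] =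
        e • ![1, algebraMap k⟮a⟯ A (IntermediateField.AdjoinSimple.gen k a), w, s]

variable {a : K} {f g B C : Polynomial k⟮a⟯} {T : ElementaryMap f g B C}
  {T' : ElementaryMap g f C B} {F G : RatMap k 3 3}

variable (T) in
lemma ElementaryMap.exists_isRealizedBy : ∃ F : RatMap k 3 3, T.IsRealizedBy F := by
  obtain ⟨F, e, he, hF⟩ := exists_ratMap_of_adjoin_simple a ![T.den,
    MvPolynomial.C (IntermediateField.AdjoinSimple.gen k a) * T.den, shearPolynomial C f * T.den,
    T.num]
  refine ⟨F, fun {A} _ _ _ _ {y z w s} h => ⟨algebraMap k⟮a⟯ A e * aeval ![y, z] T.den,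
    mul_ne_zero ((map_ne_zero _).2 he) h.den_ne_zero, ?_⟩⟩
  rw [hF, mul_smul]
  congr 1
  funext i
  fin_cases i <;> simp [aeval_shearPolynomial, h.shear_eq, h.num_eq, mul_comm]

lemma ElementaryMap.IsRealizedBy.exists_evalAt_evalAt (hF : T.IsRealizedBy F)
    (hG : T'.IsRealizedBy G) {A : Type} [Field A] [Algebra k A] [Algebra k⟮a⟯ A]
    [IsScalarTower k k⟮a⟯ A] {y z w s : A} (h : T.MapsTo y z w s) (h' : T'.MapsTo w s y z) :
    ∃ e : A, e ≠ 0 ∧ G.evalAt (F.evalAt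
        ![1, algebraMap k⟮a⟯ A (IntermediateField.AdjoinSimple.gen k a), y, z]) =
      e • ![1, algebraMap k⟮a⟯ A (IntermediateField.AdjoinSimple.gen k a), y, z] := by
  obtain ⟨e, he, hFe⟩ := hF h
  obtain ⟨e', he', hGe⟩ := hG h'
  exact ⟨e ^ G.deg * e', mul_ne_zero (pow_ne_zero _ he) he',
    by rw [hFe, G.evalAt_smul, hGe, smul_smul]⟩

variable [IsAlgClosed k]

lemma locus_eq_univ_of_tower {E A : Type} [Field E] [Algebra k E] [Field A] [Algebra k A]
    [Algebra E A] [IsScalarTower k E A] {a : E} (ha : Transcendental k a) {y z : A}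
    (hy : AlgebraicIndependent E ![y, z]) : locus k ![1, algebraMap E A a, y, z] = Set.univ := by
  have ha' : AlgebraicIndependent k fun _ : Fin 1 => algebraMap E A a :=
    algebraicIndependent_unique_type_iff.2
      ((transcendental_algebraMap_iff (algebraMap E A).injective).2 ha)
  have h := ha'.sumElim_of_tower (S := E) (by rintro _ ⟨_, rfl⟩; exact ⟨a, rfl⟩) hy
  have h3 : AlgebraicIndependent k ![algebraMap E A a, y, z] := by
    refine (algebraicIndependent_equiv' ((finSumFinEquiv (m := 1) (n := 2)).symm.trans
      (Equiv.sumComm _ _)) ?_).2 h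
    funext i
    fin_cases i <;> rfl
  exact locus_eq_univ_of_algebraicIndependent h3

lemma ElementaryMap.IsRealizedBy.isBirationalOn_univ (hF : T.IsRealizedBy F)
    (hG : T'.IsRealizedBy G) (ha : Transcendental k a) (hf : f ≠ 0) (hg : g ≠ 0)
    (hT : T.den ≠ 0) (hT' : T'.den ≠ 0) : IsBirationalOn k F G Set.univ Set.univ := by
  let A := FractionRing (MvPolynomial (Fin 2) k⟮a⟯)
  let x (i : Fin 2) : A := algebraMap (MvPolynomial (Fin 2) k⟮a⟯) A (X i)
  have hx : AlgebraicIndependent k⟮a⟯ ![x 0, x 1] := by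
    convert (algebraicIndependent_X (Fin 2) k⟮a⟯).map' (f := IsScalarTower.toAlgHom k⟮a⟯ _ A)
      (IsFractionRing.injective _ A) using 1
    funext i
    fin_cases i <;> rfl
  have hne {D : MvPolynomial (Fin 2) k⟮a⟯} (hD : D ≠ 0) : aeval ![x 0, x 1] D ≠ 0 :=
    fun h => hD (hx.eq_zero_of_aeval_eq_zero _ h)
  have hne' {q : Polynomial k⟮a⟯} (hq : q ≠ 0) : Polynomial.aeval (x 0) q ≠ 0 :=
    fun h => hq (transcendental_iff.1 (hx.transcendental 0) q h)
  obtain ⟨w, s, h, h'⟩ := T.exists_mapsTo_of_ne_zero T' (hne' hf) (hne hT)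
  obtain ⟨b, hb, hGF⟩ := hF.exists_evalAt_evalAt hG h h'
  obtain ⟨w, s, h, h'⟩ := T'.exists_mapsTo_of_ne_zero T (hne' hg) (hne hT')
  obtain ⟨c, hc, hFG⟩ := hG.exists_evalAt_evalAt hF h h'
  refine ProjSp.isBirationalOn_univ (ne_zero_of_zero_eq_one rfl)
    (locus_eq_univ_of_tower ?_ hx) hb hc hGF hFG
  exact (transcendental_algebraMap_iff (algebraMap k⟮a⟯ K).injective).1 ha

end ElementaryCremonaMaps

section ConesOverPlaneModels

open scoped IntermediateField

variable {k : Type} [Field k] {K : Type} [Field K] [Algebra k K] {a b c d : K}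

lemma locus_conePoint_of_transcendental {L : Type} [Field L] [Algebra k L] [Algebra K L]
    [IsScalarTower k K L] {t : L} (ht : Transcendental K t) (a b : K) :
    locus k ![1, algebraMap K L a, algebraMap K L b, t] = locus k (conePoint a b) := by
  let φ : RatFunc K →ₐ[K] L :=
    (IntermediateField.val _).comp (RatFunc.algEquivOfTranscendental t ht).toAlgHom
  rw [← locus_algHom_comp (φ.restrictScalars k) (conePoint a b)]
  congr 1
  funext i
  fin_cases i
  · simp [conePoint]
  · exact (φ.commutes a).symm
  · exact (φ.commutes b).symm
  · exact (RatFunc.algEquivOfTranscendental_X t ht).symm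

lemma isAlgebraic_adjoin_of_transcendental (htrdeg : Algebra.trdeg k K ≤ 1)
    (ha : Transcendental k a) : Algebra.IsAlgebraic k⟮a⟯ K := by
  have hind : AlgebraicIndependent k fun _ : Unit => a := algebraicIndependent_unique_type_iff.2 ha
  have hbasis := hind.isTranscendenceBasis_of_trdeg_le_of_finite (by simpa using htrdeg)
  have := hbasis.isAlgebraic_field
  rwa [Set.range_const] at this

lemma exists_aeval_eq_of_adjoin_pair_eq_top (hab : k⟮a, b⟯ = ⊤) (hb : IsAlgebraic k⟮a⟯ b) (c : K) :
    ∃ C : Polynomial k⟮a⟯, Polynomial.aeval b C = c := by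
  have hc : c ∈ (k⟮a⟯⟮b⟯).restrictScalars k := by
    rw [IntermediateField.adjoin_simple_adjoin_simple, hab]
    trivial
  have hc' : c ∈ (k⟮a⟯⟮b⟯).toSubalgebra := hc
  rwa [IntermediateField.adjoin_simple_toSubalgebra_of_isAlgebraic hb,
    Algebra.adjoin_singleton_eq_range_aeval] at hc'

lemma transcendental_C_add_X_mul_C (β : K) {γ : K} (hγ : γ ≠ 0) :
    Transcendental K (RatFunc.C β + RatFunc.X * RatFunc.C γ) := by
  intro h
  have hC (x : K) : RatFunc.C x ∈ algebraicClosure K (RatFunc K) :=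
    (algebraicClosure K (RatFunc K)).algebraMap_mem x
  have hX := div_mem (sub_mem (mem_algebraicClosure_iff.2 h) (hC β)) (hC γ)
  rw [add_sub_cancel_left, mul_div_cancel_right₀ _ ((map_ne_zero _).2 hγ)] at hX
  exact RatFunc.transcendental_X (mem_algebraicClosure_iff.1 hX)

lemma transcendental_of_add_mul_mul_eq_one {L : Type*} [Field L] [Algebra K L] {β γ : K} {ρ s : L}
    (hρ : Transcendental K ρ) (h : (algebraMap K L β + s * algebraMap K L γ) * ρ = 1) :
    Transcendental K s := by
  intro hs
  have hC (x : K) : algebraMap K L x ∈ algebraicClosure K L :=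
    (algebraicClosure K L).algebraMap_mem x
  have hρ' := inv_mem (add_mem (hC β) (mul_mem (mem_algebraicClosure_iff.2 hs) (hC γ)))
  rw [← eq_inv_of_mul_eq_one_right h] at hρ'
  exact hρ (mem_algebraicClosure_iff.1 hρ')

lemma nonempty_elementaryMap_minpoly {E : Type*} [Field E] [Algebra E K] {B C : Polynomial E}
    (hC : Polynomial.aeval b C = c)
    (hB : Polynomial.aeval c B = b) :
    Nonempty (ElementaryMap (minpoly E b) (minpoly E c) B C) :=
  nonempty_elementaryMap (minpoly.dvd _ _ (by simp [Polynomial.aeval_comp, hC, hB]))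
    (minpoly.dvd _ _ (by simp [Polynomial.aeval_comp, hC]))

lemma ElementaryMap.exists_mapsTo_of_minpoly {E : IntermediateField k K} [CharZero E]
    {B C : Polynomial E}
    (T : ElementaryMap (minpoly E b) (minpoly E c) B C)
    (T' : ElementaryMap (minpoly E c) (minpoly E b) C B) (hb : IsIntegral E b) (hc : IsIntegral E c)
    (hC : Polynomial.aeval b C = c) (hB : Polynomial.aeval c B = b) :
    ∃ s : RatFunc K, T.MapsTo (RatFunc.C b) RatFunc.X (RatFunc.C c) s ∧
      T'.MapsTo (RatFunc.C c) s (RatFunc.C b) RatFunc.X ∧ Transcendental K s := by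
  have hconst (x : K) (P : Polynomial E) :
      Polynomial.aeval (RatFunc.C x) P = RatFunc.C (Polynomial.aeval x P) :=
    Polynomial.aeval_algebraMap_apply (RatFunc K) x P
  have hsep {x : K} (hx : IsIntegral E x) : Polynomial.aeval x (minpoly E x).derivative ≠ 0 :=
    (minpoly.irreducible hx).separable.aeval_derivative_ne_zero (minpoly.aeval _ _)
  have hρ := transcendental_C_add_X_mul_C (Polynomial.aeval b C.derivative) (hsep hb)
  obtain ⟨s, h, h', hs⟩ := T.exists_mapsTo_of_eq_zero T' (y := RatFunc.C b) (z := RatFunc.X)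
    (w := RatFunc.C c) (by simp [hconst]) (by rw [hconst, hC]) (by simp [hconst])
    (by rw [hconst, hB]) (by simpa [hconst] using hsep hb) (by simpa [hconst] using hsep hc)
    (by rw [hconst, hconst]; exact fun h0 => hρ (h0 ▸ isAlgebraic_zero))
  simp only [hconst] at hs
  exact ⟨s, h, h', transcendental_of_add_mul_mul_eq_one hρ hs⟩

lemma hasGenericPoint_conePoint (a b : K) : HasGenericPoint k (locus k (conePoint a b)) :=
  hasGenericPoint_locus (ne_zero_of_zero_eq_one rfl)

lemma IsPlaneModel.map {K' : Type} [Field K'] [Algebra k K'] (h : IsPlaneModel k a b)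
    (e : K ≃ₐ[k] K') : IsPlaneModel k (e a) (e b) where
  transcendental := fun halg =>
    h.transcendental ((isAlgebraic_algHom_iff e.toAlgHom e.injective).1 halg)
  trdeg_le_one := e.trdeg_eq ▸ h.trdeg_le_one
  adjoin_eq_top := Set.image_pair e a b ▸ adjoin_image_eq_top h.adjoin_eq_top e

lemma mem_of_add_smul_mem {F : IntermediateField k K} {x y : k} (hxy : x ≠ y)
    (hx : c + x • d ∈ F) (hy : c + y • d ∈ F) : c ∈ F ∧ d ∈ F := by
  have hd : d ∈ F := by
    have h := F.smul_mem (sub_mem hx hy) (x := (x - y)⁻¹)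
    rwa [add_sub_add_left_eq_sub, ← sub_smul, inv_smul_smul₀ (sub_ne_zero.2 hxy)] at h
  exact ⟨by simpa using sub_mem hx (F.smul_mem hd (x := x)), hd⟩

variable [IsAlgClosed k]

lemma exists_transcendental_add_smul_adjoin_eq_top (htrdeg : Algebra.trdeg k K ≤ 1)
    (ha : Transcendental k a) (hab : k⟮a, b⟯ = ⊤) (hc : Transcendental k c) (hcd : k⟮c, d⟯ = ⊤) :
    ∃ μ : k, Transcendental k (c + μ • d) ∧ k⟮a, c + μ • d⟯ = ⊤ := by
  have halg := isAlgebraic_adjoin_of_transcendental htrdeg ha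
  have : Finite (IntermediateField k⟮a⟯ K) :=
    Field.finite_intermediateField_of_exists_primitive_element k⟮a⟯ K ⟨b,
      IntermediateField.restrictScalars_injective k
        ((IntermediateField.adjoin_simple_adjoin_simple k a b).trans hab)⟩
  have hsub : {μ : k | IsAlgebraic k (c + μ • d)}.Subsingleton := by
    intro x hx y hy
    by_contra hxy
    exact hc (mem_algebraicClosure_iff.1 (mem_of_add_smul_mem hxy
      (mem_algebraicClosure_iff.2 hx) (mem_algebraicClosure_iff.2 hy)).1)
  have hinf : Infinite {μ : k // Transcendental k (c + μ • d)} :=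
    hsub.finite.infinite_compl.to_subtype
  obtain ⟨x, y, hxy, heq⟩ := Finite.exists_ne_map_eq_of_infinite
    fun μ : {μ : k // Transcendental k (c + μ • d)} => k⟮a⟯⟮c + μ.1 • d⟯
  refine ⟨x.1, x.2, ?_⟩
  rw [← IntermediateField.adjoin_simple_adjoin_simple, eq_top_iff, ← hcd,
    IntermediateField.adjoin_le_iff, Set.insert_subset_iff, Set.singleton_subset_iff]
  have hy : c + y.1 • d ∈ k⟮a⟯⟮c + x.1 • d⟯ :=
    heq ▸ IntermediateField.mem_adjoin_simple_self k⟮a⟯ _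
  exact mem_of_add_smul_mem (Subtype.coe_ne_coe.2 hxy)
    (IntermediateField.mem_adjoin_simple_self k⟮a⟯ (c + x.1 • d)) hy

lemma cremonaEquivalent_conePoint_swap (a b : K) :
    CremonaEquivalent k (locus k (conePoint a b)) (locus k (conePoint b a)) := by
  let M : Matrix (Fin 4) (Fin 4) k :=
    !![1, 0, 0, 0; 0, 0, 1, 0; 0, 1, 0, 0; 0, 0, 0, 1]
  have hM : M * M = 1 := by
    ext i j
    fin_cases i <;> fin_cases j <;> simp [M, Matrix.mul_apply, Fin.sum_univ_four]
  have h := cremonaEquivalent_ofMatrix hM (ξ := conePoint a b) (ne_zero_of_zero_eq_one rfl)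
  convert h using 2
  rw [RatMap.evalAt_ofMatrix]
  funext i
  fin_cases i <;> simp [M, conePoint, Matrix.mulVec, dotProduct, Fin.sum_univ_four]

lemma cremonaEquivalent_conePoint_add_smul (a b : K) (μ : k) :
    CremonaEquivalent k (locus k (conePoint a b)) (locus k (conePoint (a + μ • b) b)) := by
  let M (μ : k) : Matrix (Fin 4) (Fin 4) k :=
    !![1, 0, 0, 0; 0, 1, μ, 0; 0, 0, 1, 0; 0, 0, 0, 1]
  have hM : M (-μ) * M μ = 1 := by
    ext i j
    fin_cases i <;> fin_cases j <;> simp [M, Matrix.mul_apply, Fin.sum_univ_four]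
  have h := cremonaEquivalent_ofMatrix hM (ξ := conePoint a b) (ne_zero_of_zero_eq_one rfl)
  have hμ : RatFunc.C (algebraMap k K μ) = algebraMap k (RatFunc K) μ := rfl
  convert h using 2
  rw [RatMap.evalAt_ofMatrix]
  funext i
  fin_cases i <;>
    simp [M, conePoint, Matrix.mulVec, dotProduct, Fin.sum_univ_four, Algebra.smul_def, hμ]

variable [CharZero k]

theorem cremonaEquivalent_conePoint_of_adjoin_left (htrdeg : Algebra.trdeg k K ≤ 1)
    (ha : Transcendental k a) (hab : k⟮a, b⟯ = ⊤) (hac : k⟮a, c⟯ = ⊤) :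
    CremonaEquivalent k (locus k (conePoint a b)) (locus k (conePoint a c)) := by
  have halg := isAlgebraic_adjoin_of_transcendental htrdeg ha
  have : CharZero k⟮a⟯ := charZero_of_injective_algebraMap (algebraMap k k⟮a⟯).injective
  have hb := (halg.isAlgebraic b).isIntegral
  have hc := (halg.isAlgebraic c).isIntegral
  obtain ⟨C, hC⟩ := exists_aeval_eq_of_adjoin_pair_eq_top hab (halg.isAlgebraic b) c
  obtain ⟨B, hB⟩ := exists_aeval_eq_of_adjoin_pair_eq_top hac (halg.isAlgebraic c) b
  obtain ⟨T⟩ := nonempty_elementaryMap_minpoly hC hB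
  obtain ⟨T'⟩ := nonempty_elementaryMap_minpoly hB hC
  obtain ⟨s, h, h', hs⟩ := T.exists_mapsTo_of_minpoly T' hb hc hC hB
  obtain ⟨F, hF⟩ := T.exists_isRealizedBy
  obtain ⟨G, hG⟩ := T'.exists_isRealizedBy
  obtain ⟨e, he, hFe⟩ := hF h
  refine ⟨F, G, hF.isBirationalOn_univ hG ha (minpoly.ne_zero hb) (minpoly.ne_zero hc)
      (fun h0 => h.den_ne_zero (by rw [h0, map_zero]))
      (fun h0 => h'.den_ne_zero (by rw [h0, map_zero])),
    (isBirationalOn_locus_iff (ne_zero_of_zero_eq_one rfl) (ne_zero_of_zero_eq_one rfl)).2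
      ⟨?_, ?_, hF.exists_evalAt_evalAt hG h h'⟩⟩
  · exact (congrArg (locus k) hFe).trans
      ((locus_smul he _).trans (locus_conePoint_of_transcendental hs a c))
  · exact ne_of_eq_of_ne hFe (smul_ne_zero he (ne_zero_of_zero_eq_one rfl))

theorem IsPlaneModel.cremonaEquivalent (h : IsPlaneModel k a b) (h' : IsPlaneModel k c d) :
    CremonaEquivalent k (locus k (conePoint a b)) (locus k (conePoint c d)) := by
  obtain ⟨μ, he, hae⟩ := exists_transcendental_add_smul_adjoin_eq_top h.trdeg_le_one
    h.transcendental h.adjoin_eq_top h'.transcendental h'.adjoin_eq_top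
  have hed : k⟮c + μ • d, d⟯ = ⊤ := by
    have hd := IntermediateField.subset_adjoin k {c + μ • d, d} (Set.mem_insert_of_mem _ rfl)
    have hc := sub_mem (IntermediateField.subset_adjoin k {c + μ • d, d} (Set.mem_insert _ _))
      (IntermediateField.smul_mem _ hd (x := μ))
    rw [add_sub_cancel_right] at hc
    rw [eq_top_iff, ← h'.adjoin_eq_top, IntermediateField.adjoin_le_iff, Set.insert_subset_iff,
      Set.singleton_subset_iff]
    exact ⟨hc, hd⟩
  have hgen {x y : K} : HasGenericPoint k (locus k (conePoint x y)) := hasGenericPoint_conePoint x y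
  have hae' := cremonaEquivalent_conePoint_of_adjoin_left h.trdeg_le_one h.transcendental
    h.adjoin_eq_top hae
  have hed' := cremonaEquivalent_conePoint_of_adjoin_left h.trdeg_le_one he
    (Set.pair_comm a _ ▸ hae) hed
  exact hae'.trans hgen hgen hgen <| (cremonaEquivalent_conePoint_swap a _).trans hgen hgen hgen <|
    hed'.trans hgen hgen hgen (cremonaEquivalent_conePoint_add_smul c d μ).symm

theorem IsPlaneModel.cremonaEquivalent_of_algEquiv {K' : Type} [Field K'] [Algebra k K']
    {a' b' : K'} (h : IsPlaneModel k a b) (h' : IsPlaneModel k a' b') (e : K ≃ₐ[k] K') :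
    CremonaEquivalent k (locus k (conePoint a b)) (locus k (conePoint a' b')) := by
  have hcurve : locus k (curvePoint a b) = locus k (curvePoint (e a) (e b)) := by
    rw [← locus_algHom_comp e.toAlgHom]
    congr 1
    funext i
    fin_cases i <;> simp [curvePoint]
  rw [locus_conePoint_eq hcurve]
  exact (h.map e).cremonaEquivalent h'

end ConesOverPlaneModels

section RationalSpecialization

variable {k : Type*} [Field k] {F : Type*} [Field F] [Algebra k F]

lemma exists_algHom_ne_zero [IsAlgClosed k] {R : Type*} [CommRing R] [IsReduced R] [Algebra k R]
    [Algebra.FiniteType k R] {w : R} (hw : w ≠ 0) : ∃ π : R →ₐ[k] k, π w ≠ 0 := by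
  have : IsJacobsonRing R := isJacobsonRing_of_finiteType (A := k)
  have hbot : (⊥ : Ideal R).jacobson = ⊥ :=
    IsJacobsonRing.out inferInstance (Ideal.isRadical_bot_iff.2 inferInstance)
  obtain ⟨m, hm, hwm⟩ : ∃ m : Ideal R, m.IsMaximal ∧ w ∉ m := by
    by_contra! h
    exact hw (Ideal.mem_bot.1 (hbot ▸ Ideal.mem_sInf.2 fun {m} hm => h m hm.2))
  let _ : Field (R ⧸ m) := Ideal.Quotient.field m
  have : Module.Finite k (R ⧸ m) := finite_of_finite_type_of_isJacobsonRing k (R ⧸ m)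
  have hbij := IsAlgClosed.algebraMap_bijective_of_isIntegral (k := k) (K := R ⧸ m)
  let e := AlgEquiv.ofBijective (Algebra.ofId k (R ⧸ m)) hbij
  refine ⟨e.symm.toAlgHom.comp (Ideal.Quotient.mkₐ k m), ?_⟩
  simpa [Ideal.Quotient.eq_zero_iff_mem] using hwm

lemma exists_fg_subalgebra_lifts (P : Finset (Polynomial F)) :
    ∃ R : Subalgebra k F, R.FG ∧ ∀ p ∈ P, p ∈ Polynomial.lifts (algebraMap R F) := by
  classical
  refine ⟨Algebra.adjoin k (P.biUnion Polynomial.coeffs : Finset F), ⟨_, rfl⟩, fun p hp => ?_⟩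
  rw [Polynomial.lifts_iff_coeffs_subset_range]
  intro c hc
  exact ⟨⟨c, Algebra.subset_adjoin (Finset.mem_biUnion.2 ⟨p, hp, hc⟩)⟩, rfl⟩

lemma exists_algHom_of_monic_denominators {R : Subalgebra k F} (π : R →ₐ[k] k) :
    ∃ (D : Subalgebra k (RatFunc F)) (χ : D →ₐ[k] RatFunc k), ∀ p q : Polynomial R, q.Monic →
      ∃ x : D, x = algebraMap _ (RatFunc F) (p.map (algebraMap R F)) /
          algebraMap _ (RatFunc F) (q.map (algebraMap R F)) ∧
        χ x = algebraMap _ (RatFunc k) (p.map (π : R →+* k)) /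
          algebraMap _ (RatFunc k) (q.map (π : R →+* k)) := by
  let M : Submonoid (Polynomial R) :=
    { carrier := {q | q.Monic}, one_mem' := Polynomial.monic_one, mul_mem' := Polynomial.Monic.mul }
  let α : Polynomial R →ₐ[k] RatFunc F :=
    (IsScalarTower.toAlgHom k (Polynomial F) (RatFunc F)).comp (Polynomial.mapAlgHom R.val)
  let β : Polynomial R →ₐ[k] RatFunc k :=
    (IsScalarTower.toAlgHom k (Polynomial k) (RatFunc k)).comp (Polynomial.mapAlgHom π)
  have hα : Function.Injective α := (RatFunc.algebraMap_injective F).comp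
    (Polynomial.map_injective _ Subtype.val_injective)
  have hαM (q : M) : IsUnit (α q) :=
    (RatFunc.algebraMap_ne_zero (q.2.map (R.val : R →+* F)).ne_zero).isUnit
  have hβM (q : M) : IsUnit (β q) :=
    (RatFunc.algebraMap_ne_zero (q.2.map (π : R →+* k)).ne_zero).isUnit
  let α' : Localization M →ₐ[k] RatFunc F :=
    IsLocalization.liftAlgHom (M := M) (S := Localization M) (f := α) hαM
  let β' : Localization M →ₐ[k] RatFunc k :=
    IsLocalization.liftAlgHom (M := M) (S := Localization M) (f := β) hβM
  have hα' : Function.Injective α' := by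
    refine (IsLocalization.lift_injective_iff (g := (α : Polynomial R →+* RatFunc F)) hαM).2 ?_
    exact fun x y => ⟨fun h => by simpa [α'] using congrArg α' h, fun h => congrArg _ (hα h)⟩
  refine ⟨α'.range, β'.comp (AlgEquiv.ofInjective α' hα').symm, fun p q hq => ?_⟩
  let x := IsLocalization.mk' (Localization M) p (⟨q, hq⟩ : M)
  have hx : x * algebraMap _ (Localization M) q = algebraMap _ (Localization M) p :=
    IsLocalization.mk'_spec _ p (⟨q, hq⟩ : M)
  have hα'x := congrArg α' hx
  have hβ'x := congrArg β' hx
  simp only [map_mul, α', β', IsLocalization.liftAlgHom_apply, IsLocalization.lift_eq] at hα'x hβ'x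
  refine ⟨AlgEquiv.ofInjective α' hα' x, ?_, ?_⟩
  · rw [eq_div_iff (RatFunc.algebraMap_ne_zero (hq.map _).ne_zero)]
    exact hα'x
  · rw [eq_div_iff (RatFunc.algebraMap_ne_zero (hq.map _).ne_zero)]
    rw [AlgHom.comp_apply, AlgEquiv.toAlgHom_apply, AlgEquiv.symm_apply_apply]
    exact hβ'x

lemma wronskian_map {R S : Type*} [CommRing R] [CommRing S] (f : R →+* S) (p q : Polynomial R) :
    Polynomial.wronskian (p.map f) (q.map f) = (Polynomial.wronskian p q).map f := by
  simp [Polynomial.wronskian]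

lemma wronskian_num_denom_ne_zero [CharZero F] {x : RatFunc F}
    (hx : x ∉ Set.range (algebraMap F (RatFunc F))) :
    Polynomial.wronskian x.num x.denom ≠ 0 := by
  intro h
  rw [x.isCoprime_num_denom.wronskian_eq_zero_iff] at h
  obtain ⟨hnum, hdenom⟩ := h
  refine hx ⟨x.num.coeff 0 / x.denom.coeff 0, ?_⟩
  rw [map_div₀]
  conv_rhs => rw [← x.num_div_denom, Polynomial.eq_C_of_derivative_eq_zero hnum,
    Polynomial.eq_C_of_derivative_eq_zero hdenom]
  simp [RatFunc.algebraMap_eq_C]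

lemma div_notMem_range_of_wronskian_ne_zero {p q : Polynomial F}
    (h : Polynomial.wronskian p q ≠ 0) :
    algebraMap _ (RatFunc F) p / algebraMap _ (RatFunc F) q ∉
      Set.range (algebraMap F (RatFunc F)) := by
  rintro ⟨c, hc⟩
  have hq : q ≠ 0 := fun hq => h (hq ▸ Polynomial.wronskian_zero_right p)
  rw [eq_div_iff (RatFunc.algebraMap_ne_zero hq)] at hc
  have hp : Polynomial.C c * q = p := RatFunc.algebraMap_injective F (by
    rwa [map_mul, RatFunc.algebraMap_C])
  rw [← hp, Polynomial.wronskian, Polynomial.derivative_C_mul] at h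
  exact h (by ring)

theorem exists_algHom_ratFunc [IsAlgClosed k] [CharZero F] {A : Type*} [CommRing A] [Algebra k A]
    [Algebra.FiniteType k A] (ψ : A →ₐ[k] RatFunc F) {a : A}
    (ha : ψ a ∉ Set.range (algebraMap F (RatFunc F))) :
    ∃ χ : A →ₐ[k] RatFunc k, χ a ∉ Set.range (algebraMap k (RatFunc k)) := by
  classical
  obtain ⟨S, hS⟩ := Algebra.FiniteType.out (R := k) (A := A)
  obtain ⟨R, hRfg, hR⟩ := exists_fg_subalgebra_lifts (k := k)
    ((insert a S).biUnion fun s => {(ψ s).num, (ψ s).denom})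
  have hlift (s : A) (hs : s ∈ insert a S) : ∃ p q : Polynomial R, q.Monic ∧
      p.map (algebraMap R F) = (ψ s).num ∧ q.map (algebraMap R F) = (ψ s).denom := by
    obtain ⟨p, hp⟩ := (Polynomial.mem_lifts _).1
      (hR _ (Finset.mem_biUnion.2 ⟨s, hs, Finset.mem_insert_self _ _⟩))
    obtain ⟨q, hq⟩ := (Polynomial.mem_lifts _).1
      (hR _ (Finset.mem_biUnion.2 ⟨s, hs, Finset.mem_insert_of_mem (Finset.mem_singleton_self _)⟩))
    exact ⟨p, q, Polynomial.monic_of_injective Subtype.val_injective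
      (hq.symm ▸ RatFunc.monic_denom _), hp, hq⟩
  obtain ⟨p, q, hq, hp, hq'⟩ := hlift a (Finset.mem_insert_self _ _)
  have hW : Polynomial.wronskian p q ≠ 0 := fun h =>
    wronskian_num_denom_ne_zero ha (by rw [← hp, ← hq', wronskian_map, h, Polynomial.map_zero])
  obtain ⟨n, hn⟩ : ∃ n, (Polynomial.wronskian p q).coeff n ≠ 0 := by
    contrapose! hW
    exact Polynomial.ext hW
  have : Algebra.FiniteType k R := R.fg_iff_finiteType.1 hRfg
  obtain ⟨π, hπ⟩ := exists_algHom_ne_zero (k := k) hn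
  obtain ⟨D, χ, hD⟩ := exists_algHom_of_monic_denominators π
  have hψD : ∀ b, ψ b ∈ D := by
    suffices D.comap ψ = ⊤ from fun b => this.ge (Algebra.mem_top (x := b))
    rw [eq_top_iff, ← hS, Algebra.adjoin_le_iff]
    intro s hs
    obtain ⟨p, q, hq, hp, hq'⟩ := hlift s (Finset.mem_insert_of_mem hs)
    obtain ⟨x, hx, -⟩ := hD p q hq
    rw [hp, hq', RatFunc.num_div_denom] at hx
    exact (hx ▸ x.2 : ψ s ∈ D)
  obtain ⟨x, hx, hχx⟩ := hD p q hq
  rw [hp, hq', RatFunc.num_div_denom] at hx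
  refine ⟨χ.comp (ψ.codRestrict D hψD), ?_⟩
  rw [AlgHom.comp_apply, show ψ.codRestrict D hψD a = x from Subtype.ext hx.symm, hχx]
  refine div_notMem_range_of_wronskian_ne_zero fun h => hπ ?_
  have hcoeff := congrArg (Polynomial.coeff · n) ((wronskian_map _ _ _).symm.trans h)
  simpa only [Polynomial.coeff_map, Polynomial.coeff_zero, RingHom.coe_coe] using hcoeff

end RationalSpecialization

section Cancellation

open scoped IntermediateField.algebraAdjoinAdjoin

variable {k : Type*} [Field k]

lemma injective_of_transcendental {A B : Type*} [CommRing A] [IsDomain A] [Algebra k A]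
    [CommRing B] [Algebra k B] (htrdeg : Algebra.trdeg k A ≤ 1) (χ : A →ₐ[k] B) {a : A}
    (ha : Transcendental k (χ a)) : Function.Injective χ := by
  have ha' : Transcendental k a := fun h => ha (h.algHom χ)
  have hind : AlgebraicIndependent k fun _ : Unit => a := algebraicIndependent_unique_type_iff.2 ha'
  have halg :=
    (hind.isTranscendenceBasis_of_lift_trdeg_le_of_finite (by simpa using htrdeg)).isAlgebraic
  rw [injective_iff_map_eq_zero]
  intro x hx
  by_contra hx0
  obtain ⟨y, hy0, hxy⟩ :=
    (halg.isAlgebraic x).exists_nonzero_dvd (mem_nonZeroDivisors_of_ne_zero hx0)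
  obtain ⟨p, hp⟩ : ∃ p : Polynomial k, Polynomial.aeval a p = y := by
    simpa [Set.range_const, Algebra.adjoin_singleton_eq_range_aeval] using y.2
  have hχy : χ y = 0 := zero_dvd_iff.1 (hx ▸ map_dvd χ hxy)
  refine ha ⟨p, ?_, by rw [Polynomial.aeval_algHom_apply, hp, hχy]⟩
  rintro rfl
  exact hy0 (Subtype.ext (by simpa using hp.symm))

variable {K K' : Type*} [Field K] [Algebra k K] [Field K'] [Algebra k K']

lemma nonempty_algEquiv_ratFunc_of_algHom [IsAlgClosed k] {F : Type*} [Field F] [CharZero F]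
    [Algebra k F] [Algebra.EssFiniteType k K] (htrdeg : Algebra.trdeg k K ≤ 1)
    (φ : K →ₐ[k] RatFunc F) {c : K} (hc : φ c ∉ Set.range (algebraMap F (RatFunc F))) :
    Nonempty (K ≃ₐ[k] RatFunc k) := by
  obtain ⟨S, hS⟩ := IntermediateField.fg_top k K
  let A := Algebra.adjoin k (S : Set K)
  obtain ⟨a, ha⟩ : ∃ a : A, φ a ∉ Set.range (algebraMap F (RatFunc F)) := by
    by_contra! h
    have hle : IntermediateField.adjoin k S ≤
        (IsScalarTower.toAlgHom k F (RatFunc F)).fieldRange.comap φ :=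
      IntermediateField.adjoin_le_iff.2 fun s hs => h ⟨s, Algebra.subset_adjoin hs⟩
    exact hc (hle (hS.ge (IntermediateField.mem_top (x := c))))
  have : Algebra.FiniteType k A := A.fg_iff_finiteType.1 ⟨S, rfl⟩
  obtain ⟨χ, hχ⟩ := exists_algHom_ratFunc (φ.comp A.val) ha
  have htr : Transcendental k (χ a) :=
    RatFunc.transcendental_of_ne_C _ fun ⟨c, hc⟩ => hχ ⟨c, hc.symm⟩
  have hχinj := injective_of_transcendental
    ((trdeg_le_of_injective A.val Subtype.val_injective).trans htrdeg) χ htr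
  let χ' : IntermediateField.adjoin k (S : Set K) →ₐ[k] RatFunc k := IsFractionRing.liftAlgHom hχinj
  have hrange : χ'.fieldRange ≠ ⊥ := by
    intro h
    obtain ⟨r, hr⟩ := IntermediateField.mem_bot.1 (h.le ⟨algebraMap A _ a, rfl⟩)
    exact hχ ⟨r, hr.trans (IsFractionRing.lift_algebraMap hχinj a)⟩
  exact ⟨IntermediateField.topEquiv.symm.trans ((IntermediateField.equivOfEq hS.symm).trans
    ((AlgEquiv.ofInjectiveField χ').trans (RatFunc.Luroth.algEquiv hrange).symm))⟩

variable (k K) in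
/-- The field of constants `K` of the rational function field `K(X)`, as an extension of `k`. -/
noncomputable def constantField : IntermediateField k (RatFunc K) :=
  (IsScalarTower.toAlgHom k K (RatFunc K)).fieldRange

lemma algebraMap_mem_constantField (c : K) : algebraMap K (RatFunc K) c ∈ constantField k K :=
  ⟨c, rfl⟩

lemma mem_constantField_iff_not_algebraicIndependent (htrdeg : Algebra.trdeg k K ≤ 1) {a : K}
    (ha : Transcendental k a) {x : RatFunc K} : x ∈ constantField k K ↔ ¬ AlgebraicIndependent k
      (Sum.elim (fun _ : Unit => x) fun _ : Unit => algebraMap K (RatFunc K) a) := by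
  constructor
  · rintro ⟨c, rfl⟩ h
    have h' : AlgebraicIndependent k (Sum.elim (fun _ : Unit => c) fun _ : Unit => a) :=
      .of_comp (IsScalarTower.toAlgHom k K (RatFunc K)) (by convert h; funext i; cases i <;> rfl)
    have := h'.lift_cardinalMk_le_trdeg.trans (Cardinal.lift_le.2 htrdeg)
    norm_num at this
  · intro h
    by_contra hx
    have hX : Transcendental K x := x.transcendental_of_ne_C (by rintro ⟨c, rfl⟩; exact hx ⟨c, rfl⟩)
    exact h (.sumElim_comp (algebraicIndependent_unique_type_iff.2 ha)
      (algebraicIndependent_unique_type_iff.2 hX))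

lemma map_symm_constantField_le (htrdeg : Algebra.trdeg k K = 1) (htrdeg' : Algebra.trdeg k K' = 1)
    (e : RatFunc K ≃ₐ[k] RatFunc K')
    (he : (constantField k K).map e.toAlgHom ≤ constantField k K') :
    (constantField k K').map e.symm.toAlgHom ≤ constantField k K := by
  have : Algebra.Transcendental k K := trdeg_ne_zero_iff.1 (htrdeg.trans_ne one_ne_zero)
  obtain ⟨a, ha⟩ := Algebra.Transcendental.transcendental (R := k) (A := K)
  obtain ⟨a', ha'⟩ := he ⟨_, algebraMap_mem_constantField a, rfl⟩
  change algebraMap K' (RatFunc K') a' = e (algebraMap K (RatFunc K) a) at ha'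
  have hatr : Transcendental k a' := by
    rw [← transcendental_algebraMap_iff (algebraMap K' (RatFunc K')).injective, ha']
    intro h
    exact ha ((isAlgebraic_algebraMap_iff (algebraMap K (RatFunc K)).injective).1
      ((isAlgebraic_algHom_iff e.toAlgHom e.injective).1 h))
  rintro _ ⟨x, hx, rfl⟩
  have hx' : x ∈ constantField k K' := hx
  rw [mem_constantField_iff_not_algebraicIndependent htrdeg'.le hatr] at hx'
  refine (mem_constantField_iff_not_algebraicIndependent htrdeg.le ha).2 fun h => hx' ?_
  convert h.map' (f := e.toAlgHom) e.injective using 1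
  funext i
  cases i
  · exact (e.apply_symm_apply x).symm
  · exact ha'

theorem nonempty_algEquiv_of_ratFunc [IsAlgClosed k] [CharZero k] [Algebra.EssFiniteType k K]
    [Algebra.EssFiniteType k K'] (htrdeg : Algebra.trdeg k K = 1)
    (htrdeg' : Algebra.trdeg k K' = 1) (e : RatFunc K ≃ₐ[k] RatFunc K') :
    Nonempty (K ≃ₐ[k] K') := by
  have : CharZero K := charZero_of_injective_algebraMap (algebraMap k K).injective
  have : CharZero K' := charZero_of_injective_algebraMap (algebraMap k K').injective
  let ι := IsScalarTower.toAlgHom k K (RatFunc K)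
  let ι' := IsScalarTower.toAlgHom k K' (RatFunc K')
  by_cases he : (constantField k K).map e.toAlgHom ≤ constantField k K'
  · have he' := map_symm_constantField_le htrdeg htrdeg' e he
    have heq : (constantField k K).map e.toAlgHom = constantField k K' :=
      he.antisymm fun x hx => ⟨e.symm x, he' ⟨x, hx, rfl⟩, e.apply_symm_apply x⟩
    exact ⟨(AlgEquiv.ofInjectiveField ι).trans <|
      (IntermediateField.intermediateFieldMap e _).trans <|
      (IntermediateField.equivOfEq heq).trans (AlgEquiv.ofInjectiveField ι').symm⟩
  · have he' := mt (map_symm_constantField_le htrdeg' htrdeg e.symm) he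
    obtain ⟨_, ⟨_, ⟨c, rfl⟩, rfl⟩, hc⟩ := SetLike.not_le_iff_exists.1 he
    obtain ⟨_, ⟨_, ⟨c', rfl⟩, rfl⟩, hc'⟩ := SetLike.not_le_iff_exists.1 he'
    obtain ⟨σ⟩ := nonempty_algEquiv_ratFunc_of_algHom htrdeg.le (e.toAlgHom.comp ι) hc
    obtain ⟨σ'⟩ := nonempty_algEquiv_ratFunc_of_algHom htrdeg'.le (e.symm.toAlgHom.comp ι') hc'
    exact ⟨σ.trans σ'.symm⟩

end Cancellation

section ConesAndFunctionFields

variable {k : Type} [Field k] {K : Type} [Field K] [Algebra k K] {a b : K}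

lemma hasGenericPoint_curvePoint (a b : K) : HasGenericPoint k (locus k (curvePoint a b)) :=
  hasGenericPoint_locus (ne_zero_of_zero_eq_one rfl)

lemma IsPlaneModel.trdeg_eq_one (h : IsPlaneModel k a b) : Algebra.trdeg k K = 1 := by
  have : Algebra.Transcendental k K := ⟨a, h.transcendental⟩
  exact h.trdeg_le_one.antisymm (Cardinal.one_le_iff_ne_zero.2 (trdeg_ne_zero_iff.2 this))

lemma IsPlaneModel.essFiniteType (h : IsPlaneModel k a b) : Algebra.EssFiniteType k K := by
  classical
  exact IntermediateField.fg_top_iff.1 ⟨{a, b}, by simpa using h.adjoin_eq_top⟩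

lemma IsPlaneModel.adjoin_range_curvePoint (h : IsPlaneModel k a b) :
    IntermediateField.adjoin k (Set.range (curvePoint a b)) = ⊤ := by
  rw [eq_top_iff, ← h.adjoin_eq_top]
  refine IntermediateField.adjoin.mono k _ _ ?_
  rintro _ (rfl | rfl)
  exacts [⟨1, rfl⟩, ⟨2, rfl⟩]

lemma IsPlaneModel.adjoin_range_conePoint (h : IsPlaneModel k a b) :
    IntermediateField.adjoin k (Set.range (conePoint a b)) = ⊤ := by
  set E := IntermediateField.adjoin k (Set.range (conePoint a b))
  have hconst (c : K) : algebraMap K (RatFunc K) c ∈ E := by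
    have hle : IntermediateField.adjoin k {a, b} ≤
        E.comap (IsScalarTower.toAlgHom k K (RatFunc K)) := by
      rw [IntermediateField.adjoin_le_iff]
      rintro _ (rfl | rfl)
      exacts [IntermediateField.subset_adjoin _ _ ⟨1, rfl⟩,
        IntermediateField.subset_adjoin _ _ ⟨2, rfl⟩]
    exact hle (h.adjoin_eq_top.ge (IntermediateField.mem_top (x := c)))
  have hX : (RatFunc.X : RatFunc K) ∈ E := IntermediateField.subset_adjoin _ _ ⟨3, rfl⟩
  let E' : IntermediateField K (RatFunc K) := E.toSubfield.toIntermediateField hconst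
  have hE' : E' = ⊤ := eq_top_iff.2 <| RatFunc.adjoin_X.ge.trans <|
    IntermediateField.adjoin_simple_le_iff.2 hX
  exact eq_top_iff.2 fun x _ => (hE'.ge (IntermediateField.mem_top (x := x)) : x ∈ E')

theorem IsPlaneModel.birational_curve_iff_cremonaEquivalent_cone [IsAlgClosed k] [CharZero k]
    {K' : Type} [Field K'] [Algebra k K'] {a' b' : K'} (h : IsPlaneModel k a b)
    (h' : IsPlaneModel k a' b') :
    Birational k (locus k (curvePoint a b)) (locus k (curvePoint a' b')) ↔
      CremonaEquivalent k (locus k (conePoint a b)) (locus k (conePoint a' b')) := by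
  rw [birational_locus_iff_nonempty_algEquiv rfl rfl h.adjoin_range_curvePoint
    h'.adjoin_range_curvePoint]
  refine ⟨fun ⟨e⟩ => h.cremonaEquivalent_of_algEquiv h' e, fun ⟨F, G, _, hFG⟩ => ?_⟩
  obtain ⟨e⟩ := (birational_locus_iff_nonempty_algEquiv rfl rfl h.adjoin_range_conePoint
    h'.adjoin_range_conePoint).1 ⟨F, G, hFG⟩
  have := h.essFiniteType
  have := h'.essFiniteType
  exact nonempty_algEquiv_of_ratFunc h.trdeg_eq_one h'.trdeg_eq_one e

end ConesAndFunctionFields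

end ProjSp

/-- Corollary `cor:3` of the paper.
Let `S₁, S₂ ⊆ ℙ³` be irreducible reduced cones over an algebraically closed field of
characteristic zero, with vertices `p₁, p₂`, and let `Cᵢ = Sᵢ ∩ Hᵢ` be (general)
hyperplane sections, `Hᵢ` a plane not through `pᵢ` (for a cone all such sections are
projectively equivalent).  Then `C₁` is birational to `C₂` if and only if `S₁` is
Cremona equivalent to `S₂`. -/
theorem cones_in_P3_birational_sections_iff_cremonaEquivalent
    (k : Type) [Field k] [IsAlgClosed k] [CharZero k]
    (S₁ S₂ : Set (ProjSp k 3)) (p₁ p₂ : ProjSp k 3) (H₁ H₂ : Set (ProjSp k 3))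
    (hS₁ : IsIrredDivisor k S₁) (hS₂ : IsIrredDivisor k S₂)
    (hcone₁ : IsConeWithVertex k S₁ p₁) (hcone₂ : IsConeWithVertex k S₂ p₂)
    (hH₁ : IsHyperplane k H₁) (hH₂ : IsHyperplane k H₂)
    (hp₁ : p₁ ∉ H₁) (hp₂ : p₂ ∉ H₂) :
    Birational k (S₁ ∩ H₁) (S₂ ∩ H₂) ↔ CremonaEquivalent k S₁ S₂ := by
  obtain ⟨hgS₁, hgC₁, K₁, _, _, a₁, b₁, hmodel₁, hC₁, hequiv₁⟩ :=
    hcone₁.exists_isPlaneModel hS₁ hH₁ hp₁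
  obtain ⟨hgS₂, hgC₂, K₂, _, _, a₂, b₂, hmodel₂, hC₂, hequiv₂⟩ :=
    hcone₂.exists_isPlaneModel hS₂ hH₂ hp₂
  calc Birational k (S₁ ∩ H₁) (S₂ ∩ H₂)
      ↔ Birational k (locus k (curvePoint a₁ b₁)) (locus k (curvePoint a₂ b₂)) :=
        hC₁.congr hgC₁ (hasGenericPoint_curvePoint a₁ b₁) hgC₂ (hasGenericPoint_curvePoint a₂ b₂)
          hC₂
    _ ↔ CremonaEquivalent k (locus k (conePoint a₁ b₁)) (locus k (conePoint a₂ b₂)) :=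
        hmodel₁.birational_curve_iff_cremonaEquivalent_cone hmodel₂
    _ ↔ CremonaEquivalent k S₁ S₂ :=
        (hequiv₁.congr hgS₁ (hasGenericPoint_conePoint a₁ b₁) hgS₂ (hasGenericPoint_conePoint a₂ b₂)
          hequiv₂).symm
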